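/- arXiv:1308.0425 — 2 statements merged into one kernel-verified Lean document; each statement's English description precedes it below -/
import Mathlib

section
/- Let γ ∈ (0, n/2) and p = (n+2γ)/(n−2γ). Suppose u : ℝⁿ → (0, ∞) belongs to L^{2n/(n−2γ)}_{loc}(ℝⁿ) and satisfies, for every x ∈ ℝⁿ, u(x) = ∫_{ℝⁿ} u(y)^p |x − y|^{−(n−2γ)} dy (with the integral finite). Then there exist constants c > 0, μ > 0 and a point ξ ∈ ℝⁿ such that u(x) = c (μ/(μ² + |x − ξ|²))^{(n−2γ)/2} for all x ∈ ℝⁿ. -/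
open MeasureTheory

section

open Set Filter Topology Metric EuclideanGeometry
open scoped ENNReal

theorem lintegral_le_lintegral_meas_lt {X : Type*} [MeasurableSpace X] (μ : Measure X)
    {h : X → ℝ≥0∞} (hh : AEMeasurable h μ) (hfin : ∀ᵐ x ∂μ, h x ≠ ⊤) :
    ∫⁻ x, h x ∂μ ≤ ∫⁻ t in Ioi (0 : ℝ), μ {x | ENNReal.ofReal t < h x} := by
  have h1 : ∫⁻ x, h x ∂μ = ∫⁻ x, ENNReal.ofReal (h x).toReal ∂μ := by
    refine lintegral_congr_ae ?_
    filter_upwards [hfin] with x hx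
    rw [ENNReal.ofReal_toReal hx]
  rw [h1, lintegral_eq_lintegral_meas_lt μ (Eventually.of_forall fun x => ENNReal.toReal_nonneg)
    hh.ennreal_toReal]
  refine setLIntegral_mono' measurableSet_Ioi fun t ht => measure_mono fun x hx => ?_
  exact (ENNReal.ofReal_lt_iff_lt_toReal (le_of_lt ht)
    (by rintro h; simp [h] at hx; exact absurd hx (not_lt.2 (le_of_lt ht)))).2 hx

theorem lintegral_Ioi_ofReal_rpow {m T : ℝ} (hm : 1 < m) (hT : 0 < T) :
    ∫⁻ t in Ioi T, ENNReal.ofReal (t ^ (-m)) = ENNReal.ofReal (T ^ (1 - m) / (m - 1)) := by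
  rw [← ofReal_integral_eq_lintegral_ofReal (integrableOn_Ioi_rpow_of_lt (by linarith) hT)]
  · rw [integral_Ioi_rpow_of_lt (by linarith) hT]
    congr 1
    rw [show -m + 1 = 1 - m by ring, neg_div, ← div_neg]
    congr 1; ring
  · filter_upwards [ae_restrict_mem measurableSet_Ioi] with t ht
    exact Real.rpow_nonneg (hT.le.trans (le_of_lt ht)) _

/-- A finite-measure space, a tail bound of order `m > 1`: bound on the integral. -/
theorem lintegral_le_of_tail {X : Type*} [MeasurableSpace X] (μ : Measure X) {h : X → ℝ≥0∞}
    (hh : AEMeasurable h μ) (hfin : ∀ᵐ x ∂μ, h x ≠ ⊤) {m a b : ℝ} (hm : 1 < m) (ha : 0 < a)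
    (hb : 0 < b) (hμ : μ univ ≤ ENNReal.ofReal a)
    (htail : ∀ t : ℝ, 0 < t → μ {x | ENNReal.ofReal t < h x} ≤ ENNReal.ofReal (b * t ^ (-m))) :
    ∫⁻ x, h x ∂μ ≤ ENNReal.ofReal (m / (m - 1) * b ^ (1 / m) * a ^ (1 - 1 / m)) := by
  have hm0 : 0 < m := by linarith
  set T : ℝ := (b / a) ^ (1 / m) with hTdef
  have hT : 0 < T := by positivity
  refine (lintegral_le_lintegral_meas_lt μ hh hfin).trans ?_
  rw [← Ioc_union_Ioi_eq_Ioi hT.le, lintegral_union measurableSet_Ioi (Ioc_disjoint_Ioi le_rfl)]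
  have h1 : ∫⁻ t in Ioc 0 T, μ {x | ENNReal.ofReal t < h x} ≤ ENNReal.ofReal (T * a) := by
    calc _ ≤ ∫⁻ t in Ioc 0 T, ENNReal.ofReal a :=
          lintegral_mono fun t => (measure_mono (subset_univ _)).trans hμ
      _ = _ := by
          rw [setLIntegral_const, Real.volume_Ioc, ENNReal.ofReal_mul hT.le, sub_zero, mul_comm]
  have h2 : ∫⁻ t in Ioi T, μ {x | ENNReal.ofReal t < h x}
      ≤ ENNReal.ofReal (b * (T ^ (1 - m) / (m - 1))) := by
    calc _ ≤ ∫⁻ t in Ioi T, ENNReal.ofReal b * ENNReal.ofReal (t ^ (-m)) := by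
          refine setLIntegral_mono' measurableSet_Ioi fun t ht => ?_
          rw [← ENNReal.ofReal_mul hb.le]
          exact htail t (hT.trans ht)
      _ = _ := by
          rw [lintegral_const_mul' _ _ ENNReal.ofReal_ne_top, lintegral_Ioi_ofReal_rpow hm hT,
            ENNReal.ofReal_mul hb.le]
  refine (add_le_add h1 h2).trans ?_
  have hm1 : 0 < m - 1 := by linarith
  rw [← ENNReal.ofReal_add (by positivity) (by positivity)]
  refine ENNReal.ofReal_le_ofReal (le_of_eq ?_)
  have e1 : T * a = b ^ (1 / m) * a ^ (1 - 1 / m) := by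
    rw [hTdef, Real.div_rpow hb.le ha.le, Real.rpow_sub ha, Real.rpow_one]
    field_simp
  have e2 : T ^ (1 - m) * b = T * a := by
    have : T ^ m = b / a := by
      rw [hTdef, ← Real.rpow_mul (by positivity), one_div_mul_cancel hm0.ne', Real.rpow_one]
    rw [Real.rpow_sub hT, Real.rpow_one, this]
    field_simp
  have e3 : b * (T ^ (1 - m) / (m - 1)) = (T * a) / (m - 1) := by
    rw [← e2]; ring
  rw [e3, e1]
  field_simp
  ring

/-- A bounded function with a tail bound of order `1 / 2`. -/
theorem lintegral_le_of_tail_half {X : Type*} [MeasurableSpace X] (μ : Measure X)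
    {h : X → ℝ≥0∞} (hh : AEMeasurable h μ) {M : ℝ} {B : ℝ≥0∞} (hM : 0 ≤ M)
    (hB : B ≠ ⊤)
    (hle : ∀ᵐ x ∂μ, h x ≤ ENNReal.ofReal M)
    (htail : ∀ t : ℝ, 0 < t →
      μ {x | ENNReal.ofReal t < h x} ≤ B * ENNReal.ofReal (t ^ (-(1 / 2) : ℝ))) :
    ∫⁻ x, h x ∂μ ≤ B * ENNReal.ofReal (2 * M ^ (1 / 2 : ℝ)) := by
  have hfin : ∀ᵐ x ∂μ, h x ≠ ⊤ := by
    filter_upwards [hle] with x hx using ne_top_of_le_ne_top ENNReal.ofReal_ne_top hx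
  refine (lintegral_le_lintegral_meas_lt μ hh hfin).trans ?_
  rw [← Ioc_union_Ioi_eq_Ioi hM, lintegral_union measurableSet_Ioi (Ioc_disjoint_Ioi le_rfl)]
  have h2 : ∫⁻ t in Ioi M, μ {x | ENNReal.ofReal t < h x} = 0 := by
    rw [setLIntegral_congr_fun (g := fun _ => 0) measurableSet_Ioi, lintegral_zero]
    intro t ht
    have : ∀ᵐ x ∂μ, ¬ (ENNReal.ofReal t < h x) := by
      filter_upwards [hle] with x hx
      exact not_lt.2 (hx.trans (ENNReal.ofReal_le_ofReal (le_of_lt ht)))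
    simpa [ae_iff] using this
  rw [h2, add_zero]
  calc _ ≤ ∫⁻ t in Ioc 0 M, B * ENNReal.ofReal (t ^ (-(1 / 2) : ℝ)) :=
        setLIntegral_mono' measurableSet_Ioc fun t ht => htail t ht.1
    _ = B * ENNReal.ofReal (∫ t in (0:ℝ)..M, t ^ (-(1 / 2) : ℝ)) := by
        rw [lintegral_const_mul' _ _ hB, intervalIntegral.integral_of_le hM,
          ofReal_integral_eq_lintegral_ofReal]
        · exact (intervalIntegrable_iff_integrableOn_Ioc_of_le hM).1
            (intervalIntegral.intervalIntegrable_rpow' (by norm_num))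
        · filter_upwards [ae_restrict_mem measurableSet_Ioc] with t ht
          exact Real.rpow_nonneg ht.1.le _
    _ = _ := by
        rw [integral_rpow (Or.inl (by norm_num))]
        congr 2
        norm_num
        ring

theorem exists_setLIntegral_enorm_rpow_le {n : ℕ} {α m : ℝ} (hα : 0 < α) (hm : 1 < m)
    (hαm : α * m = n) :
    ∃ C : ℝ, 0 < C ∧ ∀ (x : EuclideanSpace ℝ (Fin n)) (F : Set (EuclideanSpace ℝ (Fin n)))
      (a : ℝ), 0 < a → volume F ≤ ENNReal.ofReal a →
      ∫⁻ y in F, ‖x - y‖ₑ ^ (-α) ≤ ENNReal.ofReal (C * a ^ (1 - 1 / m)) := by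
  have hm0 : 0 < m := by linarith
  have hn : (0 : ℝ) < n := by rw [← hαm]; positivity
  have : Nonempty (Fin n) := ⟨⟨0, by exact_mod_cast hn⟩⟩
  set ω : ℝ := (volume (ball (0 : EuclideanSpace ℝ (Fin n)) 1)).toReal with hω
  have hω0 : 0 < ω := ENNReal.toReal_pos (measure_ball_pos _ _ one_pos).ne' measure_ball_lt_top.ne
  refine ⟨m / (m - 1) * ω ^ (1 / m), ?_, fun x F a ha hF => ?_⟩
  · have : 0 < m - 1 := by linarith
    positivity
  have hmeas : Measurable fun y : EuclideanSpace ℝ (Fin n) => ‖x - y‖ₑ ^ (-α) := by fun_prop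
  refine lintegral_le_of_tail (volume.restrict F) hmeas.aemeasurable ?_ hm ha hω0
    (by simpa using hF) fun t ht => ?_
  · have h0 : ∀ᵐ y : EuclideanSpace ℝ (Fin n), y ≠ x := by
      simp [ae_iff]
    filter_upwards [ae_restrict_of_ae h0] with y hy
    have : ‖x - y‖ₑ ≠ 0 := by simpa [sub_eq_zero] using hy.symm
    exact ENNReal.rpow_ne_top_of_ne_zero this enorm_ne_top
  · have hsub : {y | ENNReal.ofReal t < ‖x - y‖ₑ ^ (-α)} ⊆ ball x (t ^ (-(1 / α))) := by
      intro y hy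
      rw [mem_ofPred_eq, ENNReal.rpow_neg, ENNReal.lt_inv_iff_lt_inv] at hy
      rw [mem_ball, dist_comm, dist_eq_norm]
      by_contra hcon
      push Not at hcon
      have h1 : ENNReal.ofReal (t ^ (-(1 / α))) ≤ ‖x - y‖ₑ := by
        rw [← ofReal_norm]; exact ENNReal.ofReal_le_ofReal hcon
      have h2 := ENNReal.rpow_le_rpow h1 hα.le
      rw [ENNReal.ofReal_rpow_of_pos (by positivity), ← Real.rpow_mul ht.le,
        show -(1 / α) * α = -1 by field_simp, Real.rpow_neg_one, ENNReal.ofReal_inv_of_pos ht] at h2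
      exact absurd hy (not_lt.2 h2)
    calc _ ≤ volume (ball x (t ^ (-(1 / α)))) :=
          (Measure.restrict_apply_le _ _).trans (measure_mono hsub)
      _ = ENNReal.ofReal (ω * t ^ (-m)) := by
          rw [Measure.addHaar_ball _ _ (by positivity), mul_comm ω, ENNReal.ofReal_mul (by positivity),
            hω, ENNReal.ofReal_toReal measure_ball_lt_top.ne, finrank_euclideanSpace_fin,
            ← Real.rpow_natCast, ← Real.rpow_mul ht.le, ← hαm]
          congr 3
          field_simp

theorem lintegral_mul_le_of_weak {n : ℕ} {m : ℝ} (hm : 1 < m)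
    {A : Set (EuclideanSpace ℝ (Fin n))}
    {V g : EuclideanSpace ℝ (Fin n) → ℝ≥0∞} (hV : Measurable V) (hg : Measurable g)
    (hgfin : ∀ x, g x ≠ ⊤) {ε N : ℝ} (hε : 0 < ε) (hN : 0 < N)
    (hVA : ∫⁻ x in A, V x ^ (m / (m - 1)) ≤ ENNReal.ofReal (ε ^ (m / (m - 1))))
    (hweak : ∀ t : ℝ, 0 < t →
      volume.restrict A {x | ENNReal.ofReal t < g x} ≤ ENNReal.ofReal (N * t ^ (-(2 * m))))
    {A' : Set (EuclideanSpace ℝ (Fin n))} (hA' : A' ⊆ A) {a : ℝ} (ha : 0 < a)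
    (haA : volume A' ≤ ENNReal.ofReal a) :
    ∫⁻ x in A', V x * g x ≤
      ENNReal.ofReal (ε * 2 ^ (1 / m) * N ^ (1 / (2 * m)) * a ^ (1 / (2 * m))) := by
  have hm0 : 0 < m := by linarith
  have hm1 : 0 < m - 1 := by linarith
  have h1 : ∫⁻ x in A', g x ^ m ≤ ENNReal.ofReal (2 * N ^ (1 / 2 : ℝ) * a ^ (1 / 2 : ℝ)) := by
    have := lintegral_le_of_tail (volume.restrict A') (h := fun x => g x ^ m)
      (hg.pow_const m).aemeasurable
      (Eventually.of_forall fun x => ENNReal.rpow_ne_top_of_nonneg hm0.le (hgfin x))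
      (m := 2) (by norm_num) ha hN (by simpa using haA) ?_
    · convert this using 3 <;> norm_num
    · intro t ht
      have e : {x | ENNReal.ofReal t < g x ^ m} = {x | ENNReal.ofReal (t ^ (1 / m)) < g x} := by
        ext x
        rw [mem_ofPred_eq, mem_ofPred_eq, ← ENNReal.ofReal_rpow_of_pos ht, one_div,
          ENNReal.rpow_inv_lt_iff hm0]
      rw [e]
      refine (Measure.restrict_mono hA' le_rfl _).trans ((hweak _ (by positivity)).trans_eq ?_)
      rw [← Real.rpow_mul ht.le]
      congr 3
      field_simp
  have hq : (m / (m - 1)).HolderConjugate m := by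
    have := (Real.HolderConjugate.conjExponent hm).symm
    simpa [Real.conjExponent] using this
  refine (ENNReal.lintegral_mul_le_Lp_mul_Lq (volume.restrict A') hq hV.aemeasurable
    hg.aemeasurable).trans ?_
  have h2 : (∫⁻ x in A', V x ^ (m / (m - 1))) ^ (1 / (m / (m - 1))) ≤ ENNReal.ofReal ε := by
    have := (lintegral_mono' (Measure.restrict_mono hA' le_rfl) le_rfl).trans hVA
    refine (ENNReal.rpow_le_rpow this (by positivity)).trans_eq ?_
    rw [ENNReal.ofReal_rpow_of_pos (by positivity), ← Real.rpow_mul hε.le,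
      mul_one_div_cancel (by positivity), Real.rpow_one]
  refine (mul_le_mul' h2 (ENNReal.rpow_le_rpow h1 (by positivity : 0 ≤ 1 / m))).trans_eq ?_
  rw [ENNReal.ofReal_rpow_of_pos (by positivity), ← ENNReal.ofReal_mul hε.le]
  congr 1
  rw [Real.mul_rpow (by positivity) (by positivity), Real.mul_rpow (by positivity) (by positivity),
    ← Real.rpow_mul hN.le, ← Real.rpow_mul ha.le,
    show 1 / 2 * (1 / m) = 1 / (2 * m) by field_simp]
  ring

theorem exists_ae_eq_zero_of_le_potential {n : ℕ} {α m : ℝ} (hα : 0 < α) (hm : 1 < m)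
    (hαm : α * m = n) :
    ∃ ε : ℝ, 0 < ε ∧ ∀ (A : Set (EuclideanSpace ℝ (Fin n)))
      (V g : EuclideanSpace ℝ (Fin n) → ℝ≥0∞), MeasurableSet A → volume A ≠ ⊤ →
      Measurable V → Measurable g → (∀ x, g x ≠ ⊤) → ∫⁻ x in A, g x ^ (2 * m) ≠ ⊤ →
      ∫⁻ x in A, V x ^ (m / (m - 1)) ≤ ENNReal.ofReal ε →
      (∀ x ∈ A, g x ≤ ∫⁻ y in A, ‖x - y‖ₑ ^ (-α) * (V y * g y)) →
      ∀ᵐ x ∂volume.restrict A, g x = 0 := by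
  obtain ⟨C, hC, hker⟩ := exists_setLIntegral_enorm_rpow_le hα hm hαm
  have hm0 : 0 < m := by linarith
  have hm1 : 0 < m - 1 := by linarith
  set δ : ℝ := (1 / 2) ^ (1 / (2 * m)) / (2 * C * 2 ^ (1 / m)) with hδ
  have hδ0 : 0 < δ := by positivity
  refine ⟨δ ^ (m / (m - 1)), by positivity, fun A V g hA hAfin hV hg hgfin hgA hVA hle => ?_⟩
  set S : ℝ≥0∞ := ⨆ t : {t : ℝ // 0 < t},
    ENNReal.ofReal (t.1 ^ (2 * m)) * volume.restrict A {x | ENNReal.ofReal t.1 < g x} with hS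
  have hS_ne_top : S ≠ ⊤ := by
    refine ne_top_of_le_ne_top hgA (iSup_le fun ⟨t, ht⟩ => ?_)
    refine le_trans ?_ (mul_meas_ge_le_lintegral₀ (hg.pow_const _).aemeasurable
      (ENNReal.ofReal (t ^ (2 * m))))
    refine mul_le_mul' le_rfl (measure_mono fun x hx => ?_)
    rw [mem_ofPred_eq] at hx ⊢
    rw [← ENNReal.ofReal_rpow_of_pos ht]
    exact ENNReal.rpow_le_rpow hx.le (by positivity)
  have hSle : ∀ t : ℝ, 0 < t → ENNReal.ofReal (t ^ (2 * m)) *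
      volume.restrict A {x | ENNReal.ofReal t < g x} ≤ S := fun t ht =>
    le_iSup (fun t : {t : ℝ // 0 < t} => ENNReal.ofReal (t.1 ^ (2 * m)) *
      volume.restrict A {x | ENNReal.ofReal t.1 < g x}) ⟨t, ht⟩
  suffices hS0 : S = 0 by
    have hz : ∀ k : ℕ, volume.restrict A {x | ENNReal.ofReal (1 / ((k : ℝ) + 1)) < g x} = 0 := by
      intro k
      have := hSle (1 / ((k : ℝ) + 1)) (by positivity)
      rw [hS0, nonpos_iff_eq_zero, mul_eq_zero] at this
      refine this.resolve_left ?_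
      simp only [ENNReal.ofReal_eq_zero, not_le]
      positivity
    rw [ae_iff]
    refine measure_mono_null (fun x hx => ?_) (measure_iUnion_null hz)
    rw [mem_ofPred_eq] at hx
    have hpos : 0 < (g x).toReal := ENNReal.toReal_pos hx (hgfin x)
    obtain ⟨k, hk⟩ := exists_nat_one_div_lt hpos
    rw [mem_iUnion]
    refine ⟨k, ?_⟩
    rw [mem_ofPred_eq, ENNReal.ofReal_lt_iff_lt_toReal (by positivity) (hgfin x)]
    exact hk
  by_contra hS0
  set N : ℝ := S.toReal with hN
  have hN0 : 0 < N := ENNReal.toReal_pos hS0 hS_ne_top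
  have hSN : S = ENNReal.ofReal N := (ENNReal.ofReal_toReal hS_ne_top).symm
  have hweak : ∀ t : ℝ, 0 < t →
      volume.restrict A {x | ENNReal.ofReal t < g x} ≤ ENNReal.ofReal (N * t ^ (-(2 * m))) := by
    intro t ht
    have h := hSle t ht
    rw [hSN, mul_comm, ← ENNReal.le_div_iff_mul_le (Or.inl (by simp; positivity))
      (Or.inl ENNReal.ofReal_ne_top), ← ENNReal.ofReal_div_of_pos (by positivity)] at h
    rwa [Real.rpow_neg ht.le, ← div_eq_mul_inv]
  set κ : ℝ := δ * 2 ^ (1 / m) * N ^ (1 / (2 * m)) with hκ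
  have hκ0 : 0 < κ := by positivity
  have hF : ∀ A' ⊆ A, ∀ a : ℝ, 0 < a → volume A' ≤ ENNReal.ofReal a →
      ∫⁻ x in A', V x * g x ≤ ENNReal.ofReal (κ * a ^ (1 / (2 * m))) :=
    fun A' hA' a ha haA => lintegral_mul_le_of_weak hm hV hg hgfin hδ0 hN0 hVA hweak hA' ha haA
  have hhalf : S ≤ ENNReal.ofReal (N / 2) := by
    refine iSup_le fun ⟨t, ht⟩ => ?_
    set E : Set (EuclideanSpace ℝ (Fin n)) := {x | ENNReal.ofReal t < g x} ∩ A with hE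
    have hEm : MeasurableSet E := (measurableSet_lt measurable_const hg).inter hA
    have hEA : E ⊆ A := inter_subset_right
    have hEfin : volume E ≠ ⊤ := ne_top_of_le_ne_top hAfin (measure_mono hEA)
    rw [Measure.restrict_apply (measurableSet_lt measurable_const hg)]
    change _ * volume E ≤ _
    obtain ⟨e, he, hEe⟩ : ∃ e : ℝ, 0 ≤ e ∧ volume E = ENNReal.ofReal e :=
      ⟨(volume E).toReal, ENNReal.toReal_nonneg, (ENNReal.ofReal_toReal hEfin).symm⟩
    rcases he.eq_or_lt with he0 | he0
    · rw [hEe, ← he0]; simp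
    set J : EuclideanSpace ℝ (Fin n) → ℝ≥0∞ := fun y => ∫⁻ x in E, ‖x - y‖ₑ ^ (-α) with hJ
    have hkm : Measurable fun q : EuclideanSpace ℝ (Fin n) × EuclideanSpace ℝ (Fin n) =>
        ‖q.1 - q.2‖ₑ ^ (-α) := by fun_prop
    have hJm : Measurable J := hkm.lintegral_prod_left'
    have hJle : ∀ y, J y ≤ ENNReal.ofReal (C * e ^ (1 - 1 / m)) := by
      intro y
      refine le_trans (le_of_eq ?_) (hker y E e he0 hEe.le)
      simp only [hJ, ← enorm_neg (_ - y), neg_sub]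
    have hJtail : ∀ τ : ℝ, 0 < τ →
        volume ({y | ENNReal.ofReal τ < J y} ∩ A) ≤ ENNReal.ofReal ((C * e / τ) ^ m) := by
      intro τ hτ
      set F : Set (EuclideanSpace ℝ (Fin n)) := {y | ENNReal.ofReal τ < J y} ∩ A with hFdef
      have hFm : MeasurableSet F := (measurableSet_lt measurable_const hJm).inter hA
      have hFfin : volume F ≠ ⊤ := ne_top_of_le_ne_top hAfin (measure_mono inter_subset_right)
      obtain ⟨f, hf, hFf⟩ : ∃ f : ℝ, 0 ≤ f ∧ volume F = ENNReal.ofReal f :=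
        ⟨(volume F).toReal, ENNReal.toReal_nonneg, (ENNReal.ofReal_toReal hFfin).symm⟩
      rw [hFf]
      refine ENNReal.ofReal_le_ofReal ?_
      rcases hf.eq_or_lt with hf0 | hf0
      · rw [← hf0]; positivity
      have h1 : ENNReal.ofReal (τ * f) ≤ ENNReal.ofReal (e * (C * f ^ (1 - 1 / m))) := by
        calc ENNReal.ofReal (τ * f) = ∫⁻ _ in F, ENNReal.ofReal τ := by
              rw [setLIntegral_const, hFf, ENNReal.ofReal_mul hτ.le]
          _ ≤ ∫⁻ y in F, J y := setLIntegral_mono hJm fun y hy => le_of_lt hy.1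
          _ = ∫⁻ x in E, ∫⁻ y in F, ‖x - y‖ₑ ^ (-α) :=
              lintegral_lintegral_swap (hkm.comp measurable_swap).aemeasurable
          _ ≤ ∫⁻ _ in E, ENNReal.ofReal (C * f ^ (1 - 1 / m)) :=
              lintegral_mono fun x => hker x F f hf0 hFf.le
          _ = _ := by rw [setLIntegral_const, hEe, mul_comm, ENNReal.ofReal_mul he0.le]
      rw [ENNReal.ofReal_le_ofReal_iff (by positivity), Real.rpow_sub hf0, Real.rpow_one] at h1
      have h2 : f ^ (1 / m) ≤ C * e / τ := by
        rw [le_div_iff₀ hτ]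
        have h3 : e * (C * (f / f ^ (1 / m))) = f * (e * C / f ^ (1 / m)) := by ring
        rw [h3, mul_comm τ, mul_le_mul_iff_right₀ hf0, le_div_iff₀ (by positivity)] at h1
        linarith
      calc f = (f ^ (1 / m)) ^ m := by
            rw [← Real.rpow_mul hf0.le, one_div_mul_cancel hm0.ne', Real.rpow_one]
        _ ≤ _ := Real.rpow_le_rpow (by positivity) h2 hm0.le
    set ν : Measure (EuclideanSpace ℝ (Fin n)) :=
      (volume.restrict A).withDensity fun y => V y * g y with hν
    have hVg : Measurable fun y => V y * g y := hV.mul hg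
    have h2 : ∫⁻ y, J y ∂ν ≤ ENNReal.ofReal (κ * (C * e) ^ (1 / 2 : ℝ)) *
        ENNReal.ofReal (2 * (C * e ^ (1 - 1 / m)) ^ (1 / 2 : ℝ)) := by
      refine lintegral_le_of_tail_half ν hJm.aemeasurable (by positivity) ENNReal.ofReal_ne_top
        (Eventually.of_forall hJle) fun τ hτ => ?_
      have hms : MeasurableSet {y | ENNReal.ofReal τ < J y} :=
        measurableSet_lt measurable_const hJm
      rw [hν, withDensity_apply _ hms, Measure.restrict_restrict hms]
      refine (hF _ inter_subset_right _ (by positivity) (hJtail τ hτ)).trans_eq ?_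
      rw [← ENNReal.ofReal_mul (by positivity), ← Real.rpow_mul (by positivity),
        Real.div_rpow (by positivity) hτ.le, Real.rpow_neg hτ.le,
        show m * (1 / (2 * m)) = 1 / 2 by field_simp]
      congr 1
      ring
    have h1 : ENNReal.ofReal (t * e) ≤ ∫⁻ y, J y ∂ν := by
      calc ENNReal.ofReal (t * e) = ∫⁻ _ in E, ENNReal.ofReal t := by
            rw [setLIntegral_const, hEe, ENNReal.ofReal_mul ht.le]
        _ ≤ ∫⁻ x in E, ∫⁻ y in A, ‖x - y‖ₑ ^ (-α) * (V y * g y) := by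
            refine setLIntegral_mono' hEm fun x hx => ?_
            exact (le_of_lt hx.1).trans (hle x hx.2)
        _ = ∫⁻ y in A, ∫⁻ x in E, ‖x - y‖ₑ ^ (-α) * (V y * g y) :=
            lintegral_lintegral_swap (hkm.mul (hVg.comp measurable_snd)).aemeasurable
        _ = ∫⁻ y in A, (V y * g y) * J y := by
            refine lintegral_congr fun y => ?_
            rw [lintegral_mul_const _ (by fun_prop), mul_comm]
        _ = _ := by rw [hν, lintegral_withDensity_eq_lintegral_mul _ hVg hJm]; rfl
    have h3 := h1.trans h2
    rw [← ENNReal.ofReal_mul (by positivity), ENNReal.ofReal_le_ofReal_iff (by positivity)] at h3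
    have h4 : κ * (C * e) ^ (1 / 2 : ℝ) * (2 * (C * e ^ (1 - 1 / m)) ^ (1 / 2 : ℝ))
        = 2 * C * κ * (e / e ^ (1 / (2 * m))) := by
      rw [Real.mul_rpow hC.le he0.le, Real.mul_rpow hC.le (by positivity), ← Real.rpow_mul he0.le]
      have c2 : C ^ (1 / 2 : ℝ) * C ^ (1 / 2 : ℝ) = C := by
        rw [← Real.rpow_add hC]; norm_num
      have e2 : e ^ (1 / 2 : ℝ) * e ^ ((1 - 1 / m) * (1 / 2)) = e / e ^ (1 / (2 * m)) := by
        calc _ = e ^ (1 - 1 / (2 * m)) := by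
              rw [← Real.rpow_add he0]
              congr 1
              field_simp
              ring
          _ = _ := by rw [Real.rpow_sub he0, Real.rpow_one]
      rw [← e2]
      nth_rewrite 3 [← c2]
      ring
    rw [h4] at h3
    have h5 : t * e ^ (1 / (2 * m)) ≤ (N / 2) ^ (1 / (2 * m)) := by
      have h6 : 2 * C * κ = (N / 2) ^ (1 / (2 * m)) := by
        rw [hκ, hδ, div_eq_mul_one_div N, Real.mul_rpow hN0.le (by norm_num)]
        field_simp
      rw [← h6]
      have h7 : 2 * C * κ * (e / e ^ (1 / (2 * m))) = e * (2 * C * κ / e ^ (1 / (2 * m))) := by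
        ring
      rw [h7, mul_comm t, mul_le_mul_iff_right₀ he0, le_div_iff₀ (by positivity)] at h3
      exact h3
    rw [hEe, ← ENNReal.ofReal_mul (by positivity)]
    refine ENNReal.ofReal_le_ofReal ?_
    have h8 := Real.rpow_le_rpow (by positivity) h5 (by positivity : 0 ≤ 2 * m)
    rwa [Real.mul_rpow ht.le (by positivity), ← Real.rpow_mul he0.le,
      ← Real.rpow_mul (by positivity), one_div_mul_cancel (by positivity), Real.rpow_one,
      Real.rpow_one] at h8
  rw [hSN, ENNReal.ofReal_le_ofReal_iff (by positivity)] at hhalf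
  linarith

/-- The extended-real valued positive solutions of `u = |x| ^ (-α) ⋆ u ^ (2 * m - 1)`, with
`2 * m`-th power locally integrable; the conformally invariant case is `α * m = n`. -/
structure IsPotentialSolution {n : ℕ} (α m : ℝ) (f : EuclideanSpace ℝ (Fin n) → ℝ≥0∞) : Prop where
  measurable : Measurable f
  ne_zero : ∀ x, f x ≠ 0
  ne_top : ∀ x, f x ≠ ⊤
  eq_potential : ∀ x, f x = ∫⁻ y, ‖x - y‖ₑ ^ (-α) * f y ^ (2 * m - 1)
  lintegral_ball_ne_top : ∀ R : ℝ, ∫⁻ y in ball 0 R, f y ^ (2 * m) ≠ ⊤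

/-- The Kelvin transform with respect to the sphere of radius `R` about the origin. -/
noncomputable def kelvin {n : ℕ} (α R : ℝ) (f : EuclideanSpace ℝ (Fin n) → ℝ≥0∞)
    (x : EuclideanSpace ℝ (Fin n)) : ℝ≥0∞ :=
  ENNReal.ofReal (R / ‖x‖) ^ α * f (inversion 0 R x)

section Inversion

variable {n : ℕ}

theorem inversion_zero_eq_smul (R : ℝ) (x : EuclideanSpace ℝ (Fin n)) :
    inversion 0 R x = (R ^ 2 / ‖x‖ ^ 2) • x := by
  simp [inversion, div_pow]

theorem norm_inversion_zero (R : ℝ) (x : EuclideanSpace ℝ (Fin n)) :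
    ‖inversion 0 R x‖ = R ^ 2 / ‖x‖ := by
  simpa using dist_inversion_center (0 : EuclideanSpace ℝ (Fin n)) x R

theorem inversion_zero_ne_zero {R : ℝ} (hR : 0 < R) {x : EuclideanSpace ℝ (Fin n)} (hx : x ≠ 0) :
    inversion 0 R x ≠ 0 := by
  rw [Ne, inversion_eq_center hR.ne']; exact hx

theorem inversion_image_puncturedBall {R : ℝ} (hR : 0 < R) :
    inversion 0 R '' (ball (0 : EuclideanSpace ℝ (Fin n)) R \ {0}) = (closedBall 0 R)ᶜ := by
  ext y
  simp only [mem_image, Set.mem_sdiff, mem_ball_zero_iff, mem_singleton_iff, mem_compl_iff,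
    mem_closedBall_zero_iff, not_le]
  constructor
  · rintro ⟨x, ⟨hx, hx0⟩, rfl⟩
    have hx0 : 0 < ‖x‖ := norm_pos_iff.2 hx0
    rw [norm_inversion_zero, lt_div_iff₀ hx0]
    nlinarith
  · intro hy
    have hy0 : 0 < ‖y‖ := hR.trans hy
    refine ⟨inversion 0 R y, ⟨?_, inversion_zero_ne_zero hR (norm_pos_iff.1 hy0)⟩,
      inversion_inversion _ hR.ne' _⟩
    rw [norm_inversion_zero, div_lt_iff₀ hy0]
    nlinarith

theorem measurable_inversion_zero (R : ℝ) :
    Measurable (inversion (0 : EuclideanSpace ℝ (Fin n)) R) := by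
  have : inversion (0 : EuclideanSpace ℝ (Fin n)) R = fun x => (R ^ 2 / ‖x‖ ^ 2) • x :=
    funext (inversion_zero_eq_smul R)
  rw [this]
  fun_prop

theorem measurable_kelvin {α R : ℝ} {f : EuclideanSpace ℝ (Fin n) → ℝ≥0∞} (hf : Measurable f) :
    Measurable (kelvin α R f) := by
  unfold kelvin
  exact (by fun_prop : Measurable fun x : EuclideanSpace ℝ (Fin n) =>
    ENNReal.ofReal (R / ‖x‖) ^ α).mul (hf.comp (measurable_inversion_zero R))

theorem lintegral_compl_closedBall_eq {R : ℝ} (hR : 0 < R)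
    (G : EuclideanSpace ℝ (Fin n) → ℝ≥0∞) :
    ∫⁻ y in (closedBall 0 R)ᶜ, G y =
      ∫⁻ z in ball 0 R \ {0}, ENNReal.ofReal (R / ‖z‖) ^ (2 * (n : ℝ)) * G (inversion 0 R z) := by
  rw [← inversion_image_puncturedBall hR]
  have hs : MeasurableSet (ball (0 : EuclideanSpace ℝ (Fin n)) R \ {0}) :=
    measurableSet_ball.diff (measurableSet_singleton _)
  rw [lintegral_image_eq_lintegral_abs_det_fderiv_mul volume hs
    (fun x hx => (hasFDerivAt_inversion (R := R) hx.2).hasFDerivWithinAt)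
    (inversion_injective _ hR.ne').injOn]
  refine setLIntegral_congr_fun hs fun z hz => ?_
  have hz0 : 0 < ‖z‖ := norm_pos_iff.2 hz.2
  congr 1
  rw [ContinuousLinearMap.det, ContinuousLinearMap.toLinearMap_smul, LinearMap.det_smul]
  have hdet : |LinearMap.det (((ℝ ∙ (z - 0))ᗮ.reflection :
      EuclideanSpace ℝ (Fin n) →L[ℝ] EuclideanSpace ℝ (Fin n)) :
      EuclideanSpace ℝ (Fin n) →ₗ[ℝ] EuclideanSpace ℝ (Fin n))| = 1 := by
    have := Submodule.det_reflection (𝕜 := ℝ) (ℝ ∙ (z - 0))ᗮ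
    erw [this]
    simp
  rw [abs_mul, hdet, mul_one, finrank_euclideanSpace_fin, dist_zero_right,
    abs_of_nonneg (by positivity), ENNReal.ofReal_rpow_of_pos (by positivity), Real.rpow_mul
    (by positivity), Real.rpow_natCast, Real.rpow_two]

theorem lintegral_eq_lintegral_puncturedBall [Nonempty (Fin n)] {R : ℝ} (hR : 0 < R)
    {G : EuclideanSpace ℝ (Fin n) → ℝ≥0∞} (hG : Measurable G) :
    ∫⁻ y, G y = ∫⁻ z in ball 0 R \ {0},
      (G z + ENNReal.ofReal (R / ‖z‖) ^ (2 * (n : ℝ)) * G (inversion 0 R z)) := by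
  rw [lintegral_add_left hG, ← lintegral_compl_closedBall_eq hR]
  rw [← lintegral_add_compl G (measurableSet_closedBall (x := 0) (ε := R))]
  congr 1
  refine setLIntegral_congr ?_
  have h1 : (closedBall (0 : EuclideanSpace ℝ (Fin n)) R : Set _) =ᵐ[volume] ball 0 R := by
    rw [← ball_union_sphere]
    exact union_ae_eq_left_of_ae_eq_empty (ae_eq_empty.2 (Measure.addHaar_sphere _ _ _))
  exact h1.trans (sdiff_null_ae_eq_self (measure_singleton _)).symm

/-- The distance `‖z‖ ‖x - z*‖ / R`, with `z*` the inversion of `z`, in symmetric form. -/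
noncomputable def reflDist (R : ℝ) (x z : EuclideanSpace ℝ (Fin n)) : ℝ :=
  ‖z‖ / R * ‖x - inversion 0 R z‖

theorem reflDist_nonneg {R : ℝ} (hR : 0 < R) (x z : EuclideanSpace ℝ (Fin n)) :
    0 ≤ reflDist R x z := by
  unfold reflDist; positivity

theorem reflDist_sq {R : ℝ} (hR : 0 < R) (x : EuclideanSpace ℝ (Fin n))
    {z : EuclideanSpace ℝ (Fin n)} (hz : z ≠ 0) :
    reflDist R x z ^ 2 = ‖x - z‖ ^ 2 + (R ^ 2 - ‖x‖ ^ 2) * (R ^ 2 - ‖z‖ ^ 2) / R ^ 2 := by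
  have hz0 : 0 < ‖z‖ := norm_pos_iff.2 hz
  rw [reflDist, mul_pow, norm_sub_sq_real, norm_sub_sq_real, norm_inversion_zero,
    inversion_zero_eq_smul, inner_smul_right]
  field_simp
  ring

theorem reflDist_comm {R : ℝ} (hR : 0 < R) {x z : EuclideanSpace ℝ (Fin n)} (hx : x ≠ 0)
    (hz : z ≠ 0) : reflDist R x z = reflDist R z x := by
  rw [← sq_eq_sq₀ (reflDist_nonneg hR _ _) (reflDist_nonneg hR _ _), reflDist_sq hR _ hz,
    reflDist_sq hR _ hx, norm_sub_rev]
  ring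

theorem norm_sub_lt_reflDist {R : ℝ} (hR : 0 < R) {x z : EuclideanSpace ℝ (Fin n)} (hz : z ≠ 0)
    (hxR : ‖x‖ < R) (hzR : ‖z‖ < R) : ‖x - z‖ < reflDist R x z := by
  rw [← sq_lt_sq₀ (norm_nonneg _) (reflDist_nonneg hR _ _), reflDist_sq hR _ hz]
  have h1 : 0 < R ^ 2 - ‖x‖ ^ 2 := by nlinarith [norm_nonneg x]
  have h2 : 0 < R ^ 2 - ‖z‖ ^ 2 := by nlinarith [norm_nonneg z]
  have : 0 < (R ^ 2 - ‖x‖ ^ 2) * (R ^ 2 - ‖z‖ ^ 2) / R ^ 2 := by positivity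
  linarith

theorem ofReal_div_rpow_mul_enorm_rpow {α R a : ℝ} (hR : 0 < R) (ha : 0 < a) {b : ℝ} :
    ENNReal.ofReal (R / a) ^ α * ENNReal.ofReal b ^ (-α) = ENNReal.ofReal (a / R * b) ^ (-α) := by
  have h1 : ENNReal.ofReal (R / a) ^ α = ENNReal.ofReal (a / R) ^ (-α) := by
    rw [← inv_div a R, ENNReal.ofReal_inv_of_pos (by positivity), ENNReal.inv_rpow,
      ENNReal.rpow_neg]
  rw [h1, ENNReal.ofReal_mul (by positivity), ENNReal.mul_rpow_of_ne_top ENNReal.ofReal_ne_top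
    ENNReal.ofReal_ne_top]

theorem ofReal_div_rpow_mul_enorm_sub_inversion {α R : ℝ} (hR : 0 < R)
    (x : EuclideanSpace ℝ (Fin n)) {z : EuclideanSpace ℝ (Fin n)} (hz : z ≠ 0) :
    ENNReal.ofReal (R / ‖z‖) ^ α * ‖x - inversion 0 R z‖ₑ ^ (-α) =
      ENNReal.ofReal (reflDist R x z) ^ (-α) := by
  rw [← ofReal_norm, ofReal_div_rpow_mul_enorm_rpow hR (norm_pos_iff.2 hz),
    reflDist]

theorem ofReal_div_rpow_mul_enorm_inversion_sub_inversion {α R : ℝ} (hR : 0 < R)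
    {x z : EuclideanSpace ℝ (Fin n)} (hx : x ≠ 0) (hz : z ≠ 0) :
    ENNReal.ofReal (R / ‖x‖) ^ α * (ENNReal.ofReal (R / ‖z‖) ^ α *
      ‖inversion 0 R x - inversion 0 R z‖ₑ ^ (-α)) = ‖x - z‖ₑ ^ (-α) := by
  have hx0 : 0 < ‖x‖ := norm_pos_iff.2 hx
  have hz0 : 0 < ‖z‖ := norm_pos_iff.2 hz
  rw [← ofReal_norm, ofReal_div_rpow_mul_enorm_rpow hR hz0,
    ofReal_div_rpow_mul_enorm_rpow hR hx0, ← ofReal_norm (x - z)]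
  congr 2
  have := dist_inversion_inversion hx hz R
  simp only [dist_eq_norm, sub_zero] at this
  rw [this]
  field_simp

end Inversion

namespace IsPotentialSolution

variable {n : ℕ} {α m : ℝ} {f : EuclideanSpace ℝ (Fin n) → ℝ≥0∞}

theorem measurable_integrand (hf : IsPotentialSolution α m f) (x : EuclideanSpace ℝ (Fin n)) :
    Measurable fun y => ‖x - y‖ₑ ^ (-α) * f y ^ (2 * m - 1) :=
  (by fun_prop : Measurable fun y : EuclideanSpace ℝ (Fin n) => ‖x - y‖ₑ ^ (-α)).mul
    (hf.measurable.pow_const _)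

theorem ofReal_div_rpow_mul_comp_inversion (hαm : α * m = n) (hm : 1 < m)
    (f : EuclideanSpace ℝ (Fin n) → ℝ≥0∞) {R : ℝ} (hR : 0 < R)
    {z : EuclideanSpace ℝ (Fin n)} (hz : z ≠ 0) :
    ENNReal.ofReal (R / ‖z‖) ^ (2 * (n : ℝ)) * f (inversion 0 R z) ^ (2 * m - 1) =
      ENNReal.ofReal (R / ‖z‖) ^ α * kelvin α R f z ^ (2 * m - 1) := by
  have hz0 : 0 < ‖z‖ := norm_pos_iff.2 hz
  rw [kelvin, ENNReal.mul_rpow_of_nonneg _ _ (by linarith), ← mul_assoc, ← ENNReal.rpow_mul,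
    ← ENNReal.rpow_add _ _ (by simp; positivity) ENNReal.ofReal_ne_top, ← hαm]
  congr 2
  ring

/-- The equation, folded into the punctured ball by inversion. -/
theorem eq_folded [Nonempty (Fin n)] (hf : IsPotentialSolution α m f) (hαm : α * m = n) (hm : 1 < m) {R : ℝ}
    (hR : 0 < R) (x : EuclideanSpace ℝ (Fin n)) :
    f x = ∫⁻ z in ball 0 R \ {0}, (‖x - z‖ₑ ^ (-α) * f z ^ (2 * m - 1) +
      ENNReal.ofReal (reflDist R x z) ^ (-α) * kelvin α R f z ^ (2 * m - 1)) := by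
  rw [hf.eq_potential x, lintegral_eq_lintegral_puncturedBall hR (hf.measurable_integrand x)]
  refine setLIntegral_congr_fun (measurableSet_ball.diff (measurableSet_singleton _))
    fun z hz => ?_
  have hz0 : z ≠ 0 := hz.2
  congr 1
  rw [mul_left_comm, ofReal_div_rpow_mul_comp_inversion hαm hm f hR hz0, ← mul_assoc,
    mul_comm (_ ^ (-α)), ofReal_div_rpow_mul_enorm_sub_inversion hR x hz0]

theorem kelvin_eq_folded [Nonempty (Fin n)] (hf : IsPotentialSolution α m f) (hαm : α * m = n) (hm : 1 < m) {R : ℝ}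
    (hR : 0 < R) {x : EuclideanSpace ℝ (Fin n)} (hx : x ≠ 0) :
    kelvin α R f x = ∫⁻ z in ball 0 R \ {0}, (‖x - z‖ₑ ^ (-α) * kelvin α R f z ^ (2 * m - 1) +
      ENNReal.ofReal (reflDist R x z) ^ (-α) * f z ^ (2 * m - 1)) := by
  have hx0 : 0 < ‖x‖ := norm_pos_iff.2 hx
  have hα : ENNReal.ofReal (R / ‖x‖) ^ α ≠ ⊤ :=
    ENNReal.rpow_ne_top_of_ne_zero (by simp; positivity) ENNReal.ofReal_ne_top
  rw [kelvin, hf.eq_potential, lintegral_eq_lintegral_puncturedBall hR (hf.measurable_integrand _),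
    ← lintegral_const_mul' _ _ hα]
  refine setLIntegral_congr_fun (measurableSet_ball.diff (measurableSet_singleton _))
    fun z hz => ?_
  have hz0 : z ≠ 0 := hz.2
  rw [mul_add, add_comm]
  congr 1
  · rw [mul_left_comm (_ ^ (2 * (n : ℝ))), ofReal_div_rpow_mul_comp_inversion hαm hm f hR hz0,
      ← ofReal_div_rpow_mul_enorm_inversion_sub_inversion hR hx hz0]
    ring
  · rw [← mul_assoc, reflDist_comm hR hx hz0, ← ofReal_div_rpow_mul_enorm_sub_inversion hR z hx,
      ← enorm_neg (inversion 0 R x - z), neg_sub]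

theorem kelvin_ne_top (hf : IsPotentialSolution α m f) {R : ℝ} (hR : 0 < R)
    {x : EuclideanSpace ℝ (Fin n)} (hx : x ≠ 0) : kelvin α R f x ≠ ⊤ := by
  have hx0 : 0 < ‖x‖ := norm_pos_iff.2 hx
  exact ENNReal.mul_ne_top (ENNReal.rpow_ne_top_of_ne_zero (by simp; positivity)
    ENNReal.ofReal_ne_top) (hf.ne_top _)

theorem lowerSemicontinuous_seq (hf : IsPotentialSolution α m f)
    {x : EuclideanSpace ℝ (Fin n)} {u : ℕ → EuclideanSpace ℝ (Fin n)}
    (hu : Tendsto u atTop (𝓝 x)) : f x ≤ liminf (fun k => f (u k)) atTop := by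
  rw [hf.eq_potential x]
  simp_rw [hf.eq_potential (u _)]
  refine le_trans (lintegral_mono_ae ?_)
    (lintegral_liminf_le fun k => hf.measurable_integrand (u k))
  refine Eventually.of_forall fun y => ?_
  have h1 : Tendsto (fun k => ‖u k - y‖ₑ ^ (-α) * f y ^ (2 * m - 1)) atTop
      (𝓝 (‖x - y‖ₑ ^ (-α) * f y ^ (2 * m - 1))) := by
    refine ENNReal.Tendsto.mul_const ?_ ?_
    · exact (ENNReal.continuous_rpow_const.tendsto _).comp
        ((continuous_enorm.tendsto _).comp (hu.sub_const y))
    · exact Or.inr (ENNReal.rpow_ne_top_of_ne_zero (hf.ne_zero _) (hf.ne_top _))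
  exact h1.liminf_eq.ge

end IsPotentialSolution

theorem ENNReal.cross_mul_le_add_tsub {a b K K' : ℝ≥0∞} (hK : K' ≤ K) :
    K * a + K' * b ≤ (K * b + K' * a) + K * (a - b) := by
  rcases le_total a b with h | h
  · obtain ⟨d, rfl⟩ := exists_add_of_le h
    calc K * a + K' * (a + d) = (K * a + K' * a) + K' * d := by ring
      _ ≤ (K * a + K' * a) + K * d := by gcongr
      _ = K * (a + d) + K' * a := by ring
      _ ≤ _ := le_self_add
  · obtain ⟨d, hd⟩ : ∃ d, d = a - b := ⟨_, rfl⟩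
    have ha : a = b + d := by rw [hd, add_tsub_cancel_of_le h]
    rw [← hd, ha]
    calc K * (b + d) + K' * b = (K * b + K' * b) + K * d := by ring
      _ ≤ (K * b + K' * (b + d)) + K * d := by gcongr; exact le_self_add

theorem ENNReal.rpow_sub_rpow_le {a b : ℝ≥0∞} (ha : a ≠ ⊤) (ha0 : a ≠ 0) {p : ℝ} (hp : 1 < p) :
    a ^ p - b ^ p ≤ ENNReal.ofReal p * a ^ (p - 1) * (a - b) := by
  rcases le_total a b with h | h
  · rw [tsub_eq_zero_of_le (ENNReal.rpow_le_rpow h (by linarith))]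
    exact zero_le
  · lift a to NNReal using ha
    lift b to NNReal using ne_top_of_le_ne_top ENNReal.coe_ne_top h
    have ha0 : 0 < (a : ℝ) := by
      have : a ≠ 0 := by simpa using ha0
      positivity
    have h' : (b : ℝ) ≤ a := by exact_mod_cast h
    rw [tsub_le_iff_right, ← ENNReal.coe_rpow_of_nonneg _ (by linarith),
      ← ENNReal.coe_rpow_of_nonneg _ (by linarith), ← ENNReal.coe_rpow_of_nonneg _ (by linarith),
      ← ENNReal.coe_sub, ENNReal.ofReal, ← ENNReal.coe_mul, ← ENNReal.coe_mul, ← ENNReal.coe_add,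
      ENNReal.coe_le_coe, ← NNReal.coe_le_coe]
    push_cast
    rw [NNReal.coe_sub (by exact_mod_cast h), Real.coe_toNNReal _ (by linarith)]
    have key := one_add_mul_self_le_rpow_one_add (s := (b : ℝ) / a - 1) (p := p)
      (by linarith [show 0 ≤ (b : ℝ) / a by positivity]) hp.le
    rw [add_sub_cancel, Real.div_rpow b.coe_nonneg ha0.le, le_div_iff₀ (by positivity)] at key
    have h1 : (a : ℝ) ^ p = a ^ (p - 1) * a := by
      rw [← Real.rpow_add_one ha0.ne', sub_add_cancel]
    have h2 : (1 + p * ((b : ℝ) / a - 1)) * (a : ℝ) ^ p =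
        a ^ p - p * a ^ (p - 1) * (a - b) := by
      rw [h1]; field_simp; ring
    linarith

namespace IsPotentialSolution

variable {n : ℕ} {α m : ℝ} {f : EuclideanSpace ℝ (Fin n) → ℝ≥0∞}

theorem ofReal_reflDist_rpow_le (hα : 0 < α) {R : ℝ} (hR : 0 < R)
    {x z : EuclideanSpace ℝ (Fin n)} (hz : z ≠ 0) (hxR : ‖x‖ < R) (hzR : ‖z‖ < R) :
    ENNReal.ofReal (reflDist R x z) ^ (-α) ≤ ‖x - z‖ₑ ^ (-α) := by
  rw [ENNReal.rpow_neg, ENNReal.rpow_neg, ENNReal.inv_le_inv, ← ofReal_norm]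
  exact ENNReal.rpow_le_rpow (ENNReal.ofReal_le_ofReal (norm_sub_lt_reflDist hR hz hxR hzR).le)
    hα.le

theorem measurable_kernel (x : EuclideanSpace ℝ (Fin n)) (α : ℝ) :
    Measurable fun z : EuclideanSpace ℝ (Fin n) => ‖x - z‖ₑ ^ (-α) := by fun_prop

theorem measurable_reflKernel (R : ℝ) (x : EuclideanSpace ℝ (Fin n)) (α : ℝ) :
    Measurable fun z : EuclideanSpace ℝ (Fin n) => ENNReal.ofReal (reflDist R x z) ^ (-α) := by
  have := measurable_inversion_zero (n := n) R
  unfold reflDist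
  fun_prop

theorem measurableSet_puncturedBall (R : ℝ) :
    MeasurableSet (ball (0 : EuclideanSpace ℝ (Fin n)) R \ {0}) :=
  measurableSet_ball.diff (measurableSet_singleton _)

theorem le_kelvin_add [Nonempty (Fin n)] (hf : IsPotentialSolution α m f) (hαm : α * m = n)
    (hα : 0 < α) (hm : 1 < m) {R : ℝ} (hR : 0 < R) {x : EuclideanSpace ℝ (Fin n)} (hx : x ≠ 0)
    (hxR : ‖x‖ < R) :
    f x ≤ kelvin α R f x + ∫⁻ z in ball 0 R \ {0},
      ‖x - z‖ₑ ^ (-α) * (f z ^ (2 * m - 1) - kelvin α R f z ^ (2 * m - 1)) := by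
  have hk := measurable_kelvin (α := α) (R := R) hf.measurable
  have hfm := hf.measurable
  have h1 := measurable_kernel x α
  have h2 := measurable_reflKernel R x α
  rw [hf.eq_folded hαm hm hR x, hf.kelvin_eq_folded hαm hm hR hx, ← lintegral_add_left (by fun_prop)]
  refine setLIntegral_mono (by fun_prop) fun z hz => ?_
  exact ENNReal.cross_mul_le_add_tsub
    (ofReal_reflDist_rpow_le hα hR hz.2 hxR (mem_ball_zero_iff.1 hz.1))

/-- If `f ≤ kelvin f` almost everywhere in the ball, then everywhere. -/
theorem le_kelvin_of_ae [Nonempty (Fin n)] (hf : IsPotentialSolution α m f) (hαm : α * m = n)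
    (hα : 0 < α) (hm : 1 < m) {R : ℝ} (hR : 0 < R)
    (h : ∀ᵐ z ∂volume.restrict (ball 0 R \ {0}), f z ≤ kelvin α R f z)
    {x : EuclideanSpace ℝ (Fin n)} (hx : x ≠ 0) (hxR : ‖x‖ < R) : f x ≤ kelvin α R f x := by
  refine (hf.le_kelvin_add hαm hα hm hR hx hxR).trans_eq ?_
  rw [lintegral_congr_ae (g := fun _ => 0), lintegral_zero, add_zero]
  filter_upwards [h] with z hz
  rw [tsub_eq_zero_of_le (ENNReal.rpow_le_rpow hz (by linarith)), mul_zero]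

/-- The moving sphere inequality at radius `R`. -/
def LeKelvin {n : ℕ} (α R : ℝ) (f : EuclideanSpace ℝ (Fin n) → ℝ≥0∞) : Prop :=
  ∀ x, x ≠ 0 → ‖x‖ < R → f x ≤ kelvin α R f x

theorem exists_leKelvin_of_lintegral_le [Nonempty (Fin n)] (hαm : α * m = n) (hα : 0 < α)
    (hm : 1 < m) : ∃ ε : ℝ, 0 < ε ∧ ∀ f : EuclideanSpace ℝ (Fin n) → ℝ≥0∞,
      IsPotentialSolution α m f → ∀ R : ℝ, 0 < R →
        ∫⁻ x in {x | x ∈ ball 0 R \ {0} ∧ kelvin α R f x < f x}, f x ^ (2 * m) ≤ ENNReal.ofReal ε →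
        LeKelvin α R f := by
  obtain ⟨ε, hε, H⟩ := exists_ae_eq_zero_of_le_potential hα hm hαm
  have hp : 0 < 2 * m - 1 := by linarith
  have hm1 : 0 < m - 1 := by linarith
  obtain ⟨q, hq⟩ : ∃ q, q = m / (m - 1) := ⟨_, rfl⟩
  have hq0 : 0 < q := by rw [hq]; positivity
  refine ⟨ε / (2 * m - 1) ^ q, by positivity, fun f hf R hR hsmall => ?_⟩
  set A := {x | x ∈ ball 0 R \ {0} ∧ kelvin α R f x < f x} with hA
  have hk := measurable_kelvin (α := α) (R := R) hf.measurable
  have hfm := hf.measurable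
  have hAm : MeasurableSet A :=
    (measurableSet_puncturedBall R).inter (measurableSet_lt hk hfm)
  have hAB : A ⊆ ball 0 R := fun x hx => hx.1.1
  have key := H A (fun x => ENNReal.ofReal (2 * m - 1) * f x ^ (2 * m - 1 - 1))
    (fun x => f x - kelvin α R f x) hAm
    (ne_top_of_le_ne_top measure_ball_lt_top.ne (measure_mono hAB)) (by fun_prop) (by fun_prop)
    (fun x => ne_top_of_le_ne_top (hf.ne_top x) tsub_le_self) ?_ ?_ ?_
  · rw [ae_restrict_iff' hAm] at key
    refine fun x hx hxR => hf.le_kelvin_of_ae hαm hα hm hR ?_ hx hxR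
    rw [ae_restrict_iff' (measurableSet_puncturedBall R)]
    filter_upwards [key] with z hz hzB
    by_contra! hlt
    exact absurd (hz ⟨hzB, hlt⟩) (tsub_pos_of_lt hlt).ne'
  · refine ne_top_of_le_ne_top (hf.lintegral_ball_ne_top R) ?_
    refine (lintegral_mono fun x => ?_).trans (lintegral_mono_set hAB)
    exact ENNReal.rpow_le_rpow tsub_le_self (by linarith)
  · have h1 : ∀ x, (ENNReal.ofReal (2 * m - 1) * f x ^ (2 * m - 1 - 1)) ^ (m / (m - 1)) =
        ENNReal.ofReal ((2 * m - 1) ^ q) * f x ^ (2 * m) := fun x => by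
      rw [ENNReal.mul_rpow_of_nonneg _ _ (by positivity), ← hq, ENNReal.ofReal_rpow_of_pos hp,
        ← ENNReal.rpow_mul]
      congr 2
      rw [hq]; field_simp; ring
    simp_rw [h1]
    rw [lintegral_const_mul _ (by fun_prop)]
    calc _ ≤ ENNReal.ofReal ((2 * m - 1) ^ q) * ENNReal.ofReal (ε / (2 * m - 1) ^ q) := by
          gcongr
      _ = ENNReal.ofReal ε := by
        rw [← ENNReal.ofReal_mul (by positivity)]
        congr 1
        field_simp
  · intro x hx
    have h1 := hf.le_kelvin_add hαm hα hm hR hx.1.2 (mem_ball_zero_iff.1 hx.1.1)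
    rw [tsub_le_iff_left]
    refine h1.trans (add_le_add le_rfl ?_)
    have h2 := measurable_kernel x α
    calc _ ≤ ∫⁻ z in ball 0 R \ {0}, A.indicator (fun z => ‖x - z‖ₑ ^ (-α) *
          (f z ^ (2 * m - 1) - kelvin α R f z ^ (2 * m - 1))) z := by
          refine setLIntegral_mono' (measurableSet_puncturedBall R) fun z hz => ?_
          by_cases hzA : z ∈ A
          · rw [indicator_of_mem hzA]
          · have hz2 : f z ≤ kelvin α R f z := by
              by_contra! hlt
              exact hzA ⟨hz, hlt⟩
            rw [tsub_eq_zero_of_le (ENNReal.rpow_le_rpow hz2 hp.le), mul_zero]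
            exact zero_le
      _ ≤ ∫⁻ z, A.indicator (fun z => ‖x - z‖ₑ ^ (-α) *
          (f z ^ (2 * m - 1) - kelvin α R f z ^ (2 * m - 1))) z := setLIntegral_le_lintegral _ _
      _ = _ := lintegral_indicator hAm _
      _ ≤ _ := by
          refine lintegral_mono fun z => ?_
          gcongr
          exact ENNReal.rpow_sub_rpow_le (hf.ne_top z) (hf.ne_zero z) (by linarith)

end IsPotentialSolution

namespace IsPotentialSolution

variable {n : ℕ} {α m : ℝ} {f : EuclideanSpace ℝ (Fin n) → ℝ≥0∞}

theorem tendsto_ofReal_div_rpow {R : ℕ → ℝ} {L : ℝ} (hR : Tendsto R atTop (𝓝 L))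
    {r : ℕ → ℝ} {r' : ℝ} (hr' : 0 < r') (hr : Tendsto r atTop (𝓝 r')) (α : ℝ) :
    Tendsto (fun k => ENNReal.ofReal (R k / r k) ^ α) atTop (𝓝 (ENNReal.ofReal (L / r') ^ α)) :=
  (ENNReal.continuous_rpow_const.tendsto _).comp
    (ENNReal.tendsto_ofReal (hR.div hr hr'.ne'))

theorem kelvin_le_liminf (hf : IsPotentialSolution α m f) {R : ℕ → ℝ} {L : ℝ}
    (hR : Tendsto R atTop (𝓝 L)) {x : EuclideanSpace ℝ (Fin n)} (hx : x ≠ 0) :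
    kelvin α L f x ≤ liminf (fun k => kelvin α (R k) f x) atTop := by
  have hx0 : 0 < ‖x‖ := norm_pos_iff.2 hx
  calc kelvin α L f x ≤ liminf (fun k => ENNReal.ofReal (R k / ‖x‖) ^ α) atTop *
        liminf (fun k => f (inversion 0 (R k) x)) atTop := by
        rw [(tendsto_ofReal_div_rpow hR hx0 tendsto_const_nhds α).liminf_eq]
        exact mul_le_mul_right (hf.lowerSemicontinuous_seq
          (tendsto_const_nhds.inversion hR tendsto_const_nhds hx)) _
    _ ≤ _ := ENNReal.le_liminf_mul

theorem leKelvin_of_tendsto (hf : IsPotentialSolution α m f) {R : ℕ → ℝ} {L : ℝ}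
    (hL : 0 < L) (hR0 : ∀ k, 0 < R k) (hR : Tendsto R atTop (𝓝 L))
    (h : ∀ k, LeKelvin α (R k) f) : LeKelvin α L f := by
  intro x hx hxL
  have hx0 : 0 < ‖x‖ := norm_pos_iff.2 hx
  obtain ⟨y, hy⟩ : ∃ y, y = inversion 0 L x := ⟨_, rfl⟩
  have hy0 : y ≠ 0 := hy ▸ inversion_zero_ne_zero hL hx
  have hxy : inversion 0 L y = x := by rw [hy, inversion_inversion _ hL.ne']
  have hu : Tendsto (fun k => inversion 0 (R k) y) atTop (𝓝 x) := by
    rw [← hxy]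
    exact tendsto_const_nhds.inversion hR tendsto_const_nhds hy0
  refine (hf.lowerSemicontinuous_seq hu).trans ?_
  have hlim : Tendsto (fun k => ENNReal.ofReal (R k / ‖inversion 0 (R k) y‖) ^ α * f y) atTop
      (𝓝 (kelvin α L f x)) := by
    rw [kelvin, ← hy]
    exact ENNReal.Tendsto.mul_const (tendsto_ofReal_div_rpow hR hx0 hu.norm α)
      (Or.inr (hf.ne_top y))
  rw [← hlim.liminf_eq]
  refine liminf_le_liminf ?_
  filter_upwards [hu.norm.eventually_lt hR hxL] with k hk
  refine (h k _ (inversion_zero_ne_zero (hR0 k) hy0) hk).trans_eq ?_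
  rw [kelvin, inversion_inversion _ (hR0 k).ne']

theorem _root_.ENNReal.eq_of_cross_mul_eq {a b K K' : ℝ≥0∞} (hab : a ≤ b) (hb : b ≠ ⊤)
    (hK : K' < K) (hKt : K ≠ ⊤) (h : K * a + K' * b = K * b + K' * a) : a = b := by
  obtain ⟨d, rfl⟩ := exists_add_of_le hab
  have ha : a ≠ ⊤ := ne_top_of_le_ne_top hb hab
  have hd : d ≠ ⊤ := ne_top_of_le_ne_top hb le_add_self
  have h1 : (K * a + K' * a) + K' * d = (K * a + K' * a) + K * d := by
    calc _ = K * a + K' * (a + d) := by ring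
      _ = K * (a + d) + K' * a := h
      _ = _ := by ring
  rw [ENNReal.add_right_inj (ENNReal.add_ne_top.2
    ⟨ENNReal.mul_ne_top hKt ha, ENNReal.mul_ne_top (hK.ne_top) ha⟩)] at h1
  by_cases hd0 : d = 0
  · simp [hd0]
  · exact absurd ((ENNReal.mul_left_inj hd0 hd).1 h1) hK.ne

theorem eq_kelvin_of_exists [Nonempty (Fin n)] (hf : IsPotentialSolution α m f) (hαm : α * m = n)
    (hα : 0 < α) (hm : 1 < m) {R : ℝ} (hR : 0 < R) (h : LeKelvin α R f)
    {x : EuclideanSpace ℝ (Fin n)} (hx : x ≠ 0) (hxR : ‖x‖ < R) (hle : kelvin α R f x ≤ f x)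
    {y : EuclideanSpace ℝ (Fin n)} (hy : y ≠ 0) : f y = kelvin α R f y := by
  have hk := measurable_kelvin (α := α) (R := R) hf.measurable
  have hfm := hf.measurable
  have h1 := measurable_kernel x α
  have h2 := measurable_reflKernel R x α
  have hB := measurableSet_puncturedBall (n := n) R
  have hp : 0 ≤ 2 * m - 1 := by linarith
  have key : ∀ᵐ z ∂volume.restrict (ball 0 R \ {0}), f z = kelvin α R f z := by
    have hae := ae_eq_of_ae_le_of_lintegral_le (μ := volume.restrict (ball 0 R \ {0}))
      (f := fun z => ‖x - z‖ₑ ^ (-α) * f z ^ (2 * m - 1) +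
        ENNReal.ofReal (reflDist R x z) ^ (-α) * kelvin α R f z ^ (2 * m - 1))
      (g := fun z => ‖x - z‖ₑ ^ (-α) * kelvin α R f z ^ (2 * m - 1) +
        ENNReal.ofReal (reflDist R x z) ^ (-α) * f z ^ (2 * m - 1)) ?_ ?_ (by fun_prop) ?_
    · have hxn : ∀ᵐ z ∂volume.restrict (ball 0 R \ {0}), z ≠ x :=
        ae_restrict_of_ae (Measure.ae_ne volume x)
      filter_upwards [hae, hxn, ae_restrict_mem hB] with z hz hzx hzB
      have hlt : ENNReal.ofReal (reflDist R x z) ^ (-α) < ‖x - z‖ₑ ^ (-α) := by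
        rw [ENNReal.rpow_neg, ENNReal.rpow_neg, ENNReal.inv_lt_inv, ← ofReal_norm]
        have := norm_sub_lt_reflDist hR hzB.2 hxR (mem_ball_zero_iff.1 hzB.1)
        exact ENNReal.rpow_lt_rpow ((ENNReal.ofReal_lt_ofReal_iff
          ((norm_nonneg _).trans_lt this)).2 this) hα
      have hKt : ‖x - z‖ₑ ^ (-α) ≠ ⊤ :=
        ENNReal.rpow_ne_top_of_ne_zero (by simpa [sub_eq_zero] using hzx.symm) enorm_ne_top
      have hpow := ENNReal.eq_of_cross_mul_eq (ENNReal.rpow_le_rpow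
        (h z hzB.2 (mem_ball_zero_iff.1 hzB.1)) hp) (ENNReal.rpow_ne_top_of_nonneg hp
        (hf.kelvin_ne_top hR hzB.2)) hlt hKt hz
      exact (ENNReal.rpow_left_injective (by linarith)) hpow
    · filter_upwards [ae_restrict_mem hB] with z hzB
      have hzR := mem_ball_zero_iff.1 hzB.1
      obtain ⟨d, hd⟩ := exists_add_of_le (ENNReal.rpow_le_rpow (h z hzB.2 hzR) hp)
      rw [hd, mul_add, mul_add]
      have : ENNReal.ofReal (reflDist R x z) ^ (-α) * d ≤ ‖x - z‖ₑ ^ (-α) * d :=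
        mul_le_mul_left (ofReal_reflDist_rpow_le hα hR hzB.2 hxR hzR) _
      calc _ = ‖x - z‖ₑ ^ (-α) * f z ^ (2 * m - 1) +
            ENNReal.ofReal (reflDist R x z) ^ (-α) * f z ^ (2 * m - 1) +
            ENNReal.ofReal (reflDist R x z) ^ (-α) * d := by ring
        _ ≤ ‖x - z‖ₑ ^ (-α) * f z ^ (2 * m - 1) +
            ENNReal.ofReal (reflDist R x z) ^ (-α) * f z ^ (2 * m - 1) +
            ‖x - z‖ₑ ^ (-α) * d := by gcongr
        _ = _ := by ring
    · rw [← hf.eq_folded hαm hm hR x]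
      exact hf.ne_top x
    · rw [← hf.eq_folded hαm hm hR x, ← hf.kelvin_eq_folded hαm hm hR hx]
      exact hle
  rw [hf.eq_folded hαm hm hR y, hf.kelvin_eq_folded hαm hm hR hy]
  refine lintegral_congr_ae ?_
  filter_upwards [key] with z hz
  rw [← hz]

theorem eventually_leKelvin [Nonempty (Fin n)] (hf : IsPotentialSolution α m f)
    (hαm : α * m = n) (hα : 0 < α) (hm : 1 < m) {R : ℕ → ℝ} {L : ℝ}
    (hR0 : ∀ k, 0 < R k) (hR : Tendsto R atTop (𝓝 L))
    (h : ∀ x, x ≠ 0 → ‖x‖ < L → f x < kelvin α L f x) :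
    ∀ᶠ k in atTop, LeKelvin α (R k) f := by
  obtain ⟨ε, hε, H⟩ := exists_leKelvin_of_lintegral_le (n := n) hαm hα hm
  have hfm := hf.measurable
  have hAm : ∀ k, MeasurableSet {x | x ∈ ball 0 (R k) \ {0} ∧ kelvin α (R k) f x < f x} :=
    fun k => (measurableSet_puncturedBall _).inter
      (measurableSet_lt (measurable_kelvin hfm) hfm)
  have hlim := tendsto_lintegral_of_dominated_convergence
    (μ := volume.restrict (ball (0 : EuclideanSpace ℝ (Fin n)) (L + 1)))
    (F := fun k => {x | x ∈ ball 0 (R k) \ {0} ∧ kelvin α (R k) f x < f x}.indicator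
      fun x => f x ^ (2 * m)) (f := fun _ => 0) (fun x => f x ^ (2 * m))
    (fun k => (hfm.pow_const _).indicator (hAm k))
    (fun k => Eventually.of_forall fun x => indicator_le_self _ _ x)
    (hf.lintegral_ball_ne_top _) ?_
  · rw [lintegral_zero] at hlim
    filter_upwards [hlim.eventually_lt_const (ENNReal.ofReal_pos.2 hε),
      hR.eventually_lt_const (show L < L + 1 by linarith)] with k hk hkL
    refine H f hf (R k) (hR0 k) (le_trans (le_of_eq ?_) hk.le)
    rw [setLIntegral_indicator (hAm k)]
    congr 2
    refine (inter_eq_left.2 fun x hx => ?_).symm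
    exact ball_subset_ball hkL.le hx.1.1
  · have hsph : ∀ᵐ x : EuclideanSpace ℝ (Fin n), x ∉ sphere (0 : EuclideanSpace ℝ (Fin n)) L :=
      measure_eq_zero_iff_ae_notMem.1 (Measure.addHaar_sphere volume _ _)
    filter_upwards [ae_restrict_of_ae hsph, ae_restrict_of_ae (Measure.ae_ne volume 0)]
      with x hx hx0
    refine tendsto_const_nhds.congr' ?_
    rw [mem_sphere_zero_iff_norm] at hx
    rcases lt_or_gt_of_ne hx with hlt | hgt
    · filter_upwards [eventually_lt_of_lt_liminf
        ((h x hx0 hlt).trans_le (hf.kelvin_le_liminf hR hx0))] with k hk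
      rw [indicator_of_notMem]
      exact fun hx => lt_asymm hx.2 hk
    · filter_upwards [hR.eventually_lt_const hgt] with k hk
      rw [indicator_of_notMem]
      exact fun hx => absurd (mem_ball_zero_iff.1 hx.1.1) hk.not_gt

theorem leKelvin_of_small [Nonempty (Fin n)] (hαm : α * m = n) (hα : 0 < α)
    (hm : 1 < m) : ∃ ε : ℝ, 0 < ε ∧ ∀ f : EuclideanSpace ℝ (Fin n) → ℝ≥0∞,
      IsPotentialSolution α m f → ∀ R₀ : ℝ, ∫⁻ x in ball 0 R₀, f x ^ (2 * m) ≤ ENNReal.ofReal ε →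
        ∀ R, 0 < R → R ≤ R₀ → LeKelvin α R f := by
  obtain ⟨ε, hε, H⟩ := exists_leKelvin_of_lintegral_le (n := n) hαm hα hm
  exact ⟨ε, hε, fun f hf R₀ h R hR hRR => H f hf R hR
    ((lintegral_mono_set fun x hx => ball_subset_ball hRR hx.1.1).trans h)⟩

theorem exists_pos_volume_ball_lt [Nonempty (Fin n)] {δ : ℝ≥0∞} (hδ : 0 < δ) :
    ∃ r : ℝ, 0 < r ∧ volume (ball (0 : EuclideanSpace ℝ (Fin n)) r) < δ := by
  have hlim : Tendsto (fun r : ℝ => volume (ball (0 : EuclideanSpace ℝ (Fin n)) r))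
      (𝓝[>] 0) (𝓝 0) := by
    simp_rw [EuclideanSpace.volume_ball]
    have : Tendsto (fun r : ℝ => ENNReal.ofReal r ^ Fintype.card (Fin n)) (𝓝[>] 0)
        (𝓝 (ENNReal.ofReal 0 ^ Fintype.card (Fin n))) :=
      ((ENNReal.continuous_pow _).comp ENNReal.continuous_ofReal).continuousWithinAt
    have h2 := ENNReal.Tendsto.mul_const (b := ENNReal.ofReal (√Real.pi ^ Fintype.card (Fin n) /
      Real.Gamma (↑(Fintype.card (Fin n)) / 2 + 1))) this (Or.inr ENNReal.ofReal_ne_top)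
    have h3 : n ≠ 0 := by simpa using Fintype.card_ne_zero (α := Fin n)
    simpa [h3] using h2
  obtain ⟨r, hr, hr0⟩ := ((hlim.eventually_lt_const hδ).and self_mem_nhdsWithin).exists
  exact ⟨r, hr0, hr⟩

/-- The moving sphere alternative at the origin. -/
theorem forall_leKelvin_or_exists_eq [Nonempty (Fin n)] (hf : IsPotentialSolution α m f)
    (hαm : α * m = n) (hα : 0 < α) (hm : 1 < m) :
    (∀ R, 0 < R → LeKelvin α R f) ∨ ∃ R, 0 < R ∧ ∀ x, x ≠ 0 → f x = kelvin α R f x := by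
  obtain ⟨ε, hε, H⟩ := leKelvin_of_small (n := n) hαm hα hm
  obtain ⟨R₀, hR₀, hsmall⟩ : ∃ R₀ : ℝ, 0 < R₀ ∧
      ∫⁻ x in ball 0 R₀, f x ^ (2 * m) ≤ ENNReal.ofReal ε := by
    have hI := hf.lintegral_ball_ne_top 1
    obtain ⟨δ, hδ, hs⟩ := exists_pos_setLIntegral_lt_of_measure_lt hI (ENNReal.ofReal_pos.2 hε).ne'
    obtain ⟨r, hr0, hr⟩ := exists_pos_volume_ball_lt (n := n) hδ
    refine ⟨min r 1, lt_min hr0 one_pos, ?_⟩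
    have := hs (ball 0 (min r 1)) (((Measure.restrict_apply_le _ _).trans
      (measure_mono (ball_subset_ball (min_le_left _ _)))).trans_lt hr)
    rw [Measure.restrict_restrict measurableSet_ball,
      inter_eq_left.2 (ball_subset_ball (min_le_right _ _))] at this
    exact this.le
  by_cases hall : ∀ R, 0 < R → LeKelvin α R f
  · exact Or.inl hall
  right
  push Not at hall
  obtain ⟨R₁, hR₁, hbad⟩ := hall
  obtain ⟨S, hS⟩ : ∃ S : Set ℝ, S = {R | 0 < R ∧ ¬ LeKelvin α R f} := ⟨_, rfl⟩
  have hne : S.Nonempty := ⟨R₁, hS ▸ ⟨hR₁, hbad⟩⟩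
  have hlow : R₀ ∈ lowerBounds S := fun R hR => by
    rw [hS] at hR
    by_contra! hlt
    exact hR.2 (H f hf R₀ hsmall R hR.1 hlt.le)
  have hL : 0 < sInf S := hR₀.trans_le (le_csInf hne hlow)
  have hgood : ∀ R, 0 < R → R < sInf S → LeKelvin α R f := fun R h0 hR => by
    by_contra hc
    exact absurd (csInf_le ⟨R₀, hlow⟩ (show R ∈ S from hS ▸ ⟨h0, hc⟩)) hR.not_ge
  have hP : LeKelvin α (sInf S) f := by
    obtain ⟨v, -, hv, hvlim⟩ := exists_seq_strictMono_tendsto' hL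
    exact hf.leKelvin_of_tendsto hL (fun k => (hv k).1) hvlim fun k => hgood _ (hv k).1 (hv k).2
  refine ⟨sInf S, hL, fun y hy => ?_⟩
  by_cases hstrict : ∀ x, x ≠ 0 → ‖x‖ < sInf S → f x < kelvin α (sInf S) f x
  · obtain ⟨v, -, hvlim, hv⟩ := exists_seq_tendsto_sInf hne ⟨R₀, hlow⟩
    have hv' : ∀ k, 0 < v k ∧ ¬ LeKelvin α (v k) f := fun k => by
      have := hv k
      rwa [hS] at this
    obtain ⟨k, hk⟩ := (hf.eventually_leKelvin hαm hα hm (fun k => (hv' k).1) hvlim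
      hstrict).exists
    exact absurd hk (hv' k).2
  · push Not at hstrict
    obtain ⟨x, hx, hxR, hle⟩ := hstrict
    exact hf.eq_kelvin_of_exists hαm hα hm hL hP hx hxR hle hy

end IsPotentialSolution

theorem two_pow_mul_lintegral_comp_two_smul {n : ℕ} {G : EuclideanSpace ℝ (Fin n) → ℝ≥0∞}
    (hG : Measurable G) : (2 : ℝ≥0∞) ^ n * ∫⁻ x, G ((2 : ℝ) • x) = ∫⁻ x, G x := by
  have h1 := lintegral_map (μ := (volume : Measure (EuclideanSpace ℝ (Fin n)))) hG
    (measurable_const_smul (2 : ℝ))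
  rw [Measure.map_addHaar_smul volume two_ne_zero, lintegral_smul_measure,
    finrank_euclideanSpace_fin, abs_of_pos (by positivity),
    ENNReal.ofReal_inv_of_pos (by positivity), ENNReal.ofReal_pow (by norm_num),
    ENNReal.ofReal_ofNat] at h1
  rw [← h1, smul_eq_mul, ← mul_assoc, ENNReal.mul_inv_cancel (by simp) (by simp), one_mul]

theorem setLIntegral_ball_comp_add {n : ℕ} (c : EuclideanSpace ℝ (Fin n)) (R : ℝ)
    (F : EuclideanSpace ℝ (Fin n) → ℝ≥0∞) :
    ∫⁻ x in ball 0 R, F (c + x) = ∫⁻ x in ball c R, F x := by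
  rw [← lintegral_indicator measurableSet_ball, ← lintegral_indicator measurableSet_ball,
    ← lintegral_add_left_eq_self (μ := volume) ((ball c R).indicator F) c]
  refine lintegral_congr fun x => ?_
  simp only [indicator, mem_ball, dist_eq_norm, add_sub_cancel_left, sub_zero]

namespace IsPotentialSolution

variable {n : ℕ} {α m : ℝ} {f : EuclideanSpace ℝ (Fin n) → ℝ≥0∞}

theorem comp_add (hf : IsPotentialSolution α m f) (c : EuclideanSpace ℝ (Fin n)) :
    IsPotentialSolution α m fun x => f (c + x) where
  measurable := hf.measurable.comp (measurable_const_add c)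
  ne_zero x := hf.ne_zero _
  ne_top x := hf.ne_top _
  eq_potential x := by
    rw [hf.eq_potential, ← lintegral_add_left_eq_self (μ := volume) _ c]
    simp only [add_sub_add_left_eq_sub]
  lintegral_ball_ne_top R := by
    rw [setLIntegral_ball_comp_add c R fun y => f y ^ (2 * m)]
    refine ne_top_of_le_ne_top (hf.lintegral_ball_ne_top (R + ‖c‖)) (lintegral_mono_set ?_)
    exact ball_subset_ball' (by simp)

theorem lintegral_ne_top_of_eq_kelvin (hf : IsPotentialSolution α m f) (hαm : α * m = n)
    (hm : 1 < m) {R : ℝ} (hR : 0 < R) (h : ∀ x, x ≠ 0 → f x = kelvin α R f x) :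
    ∫⁻ x, f x ^ (2 * m) ≠ ⊤ := by
  rw [← lintegral_add_compl _ (measurableSet_closedBall (x := 0) (ε := R)),
    lintegral_compl_closedBall_eq hR]
  refine ENNReal.add_ne_top.2 ⟨ne_top_of_le_ne_top (hf.lintegral_ball_ne_top (R + 1))
    (lintegral_mono_set (closedBall_subset_ball (by linarith))), ?_⟩
  refine ne_top_of_le_ne_top (hf.lintegral_ball_ne_top R) ?_
  refine le_trans (setLIntegral_mono (hf.measurable.pow_const _) fun z hz => le_of_eq ?_)
    (lintegral_mono_set sdiff_subset)
  rw [h z hz.2, kelvin, ENNReal.mul_rpow_of_nonneg _ _ (by linarith), ← ENNReal.rpow_mul, ← hαm]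
  congr 2
  ring

theorem not_forall_leKelvin_of_lintegral_ne_top [Nonempty (Fin n)]
    (hf : IsPotentialSolution α m f) (hαm : α * m = n) (hm : 1 < m)
    (h : ∫⁻ x, f x ^ (2 * m) ≠ ⊤) : ¬ ∀ R, 0 < R → LeKelvin α R f := by
  intro hP
  obtain ⟨F, hF⟩ : ∃ F : EuclideanSpace ℝ (Fin n) → ℝ≥0∞, F = fun x => f x ^ (2 * m) := ⟨_, rfl⟩
  have hFm : Measurable F := hF ▸ hf.measurable.pow_const _
  have hdouble : ∀ x, x ≠ 0 → F x ≤ 2 ^ n * F ((2 : ℝ) • x) := by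
    intro x hx
    have hx0 : 0 < ‖x‖ := norm_pos_iff.2 hx
    have h2 : 1 < √2 := by
      rw [Real.lt_sqrt] <;> norm_num
    have h1 := hP (√2 * ‖x‖) (by positivity) x hx (by nlinarith)
    have h3 : inversion 0 (√2 * ‖x‖) x = (2 : ℝ) • x := by
      rw [inversion_zero_eq_smul, mul_pow, Real.sq_sqrt (by norm_num)]
      congr 1
      field_simp
    rw [kelvin, h3, mul_div_assoc, div_self hx0.ne', mul_one] at h1
    have h4 := ENNReal.rpow_le_rpow h1 (show 0 ≤ 2 * m by linarith)
    rw [ENNReal.mul_rpow_of_nonneg _ _ (by linarith), ← ENNReal.rpow_mul] at h4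
    have h5 : ENNReal.ofReal √2 ^ (α * (2 * m)) = 2 ^ n := by
      rw [Real.sqrt_eq_rpow, ← ENNReal.ofReal_rpow_of_pos (by norm_num), ← ENNReal.rpow_mul,
        show 1 / 2 * (α * (2 * m)) = (n : ℝ) by rw [← hαm]; ring, ENNReal.rpow_natCast,
        ENNReal.ofReal_ofNat]
    rw [h5] at h4
    rwa [hF]
  have hS : ∀ r : ℝ, MeasurableSet {x : EuclideanSpace ℝ (Fin n) | r < ‖x‖} := fun r =>
    measurableSet_lt measurable_const measurable_norm
  have hle : ∫⁻ x in {x | 1 < ‖x‖}, F x ≤ ∫⁻ x in {x | 2 < ‖x‖}, F x := by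
    rw [← lintegral_indicator (hS 1), ← lintegral_indicator (hS 2),
      ← two_pow_mul_lintegral_comp_two_smul (hFm.indicator (hS 2)),
      ← lintegral_const_mul' _ _ (by simp)]
    refine lintegral_mono fun x => ?_
    by_cases hx : 1 < ‖x‖
    · have hx2 : (2 : ℝ) • x ∈ {x : EuclideanSpace ℝ (Fin n) | 2 < ‖x‖} := by
        simp only [mem_ofPred_eq, norm_smul]
        norm_num
        linarith
      rw [indicator_of_mem (show x ∈ {x : EuclideanSpace ℝ (Fin n) | 1 < ‖x‖} from hx),
        indicator_of_mem hx2]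
      exact hdouble x (norm_pos_iff.1 (by linarith))
    · rw [indicator_of_notMem (show x ∉ {x : EuclideanSpace ℝ (Fin n) | 1 < ‖x‖} from hx)]
      exact zero_le
  have hsplit : ∫⁻ x in {x | 1 < ‖x‖}, F x =
      (∫⁻ x in {x | 2 < ‖x‖}, F x) + ∫⁻ x in {x | 1 < ‖x‖} \ {x | 2 < ‖x‖}, F x := by
    rw [← lintegral_inter_add_sdiff F {x | 1 < ‖x‖} (hS 2), inter_eq_right.2]
    intro x hx
    simp only [mem_ofPred_eq] at hx ⊢
    linarith
  have hfin : ∫⁻ x in {x | 2 < ‖x‖}, F x ≠ ⊤ :=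
    ne_top_of_le_ne_top (hF ▸ h) (setLIntegral_le_lintegral _ _)
  have hzero : ∫⁻ x in {x | 1 < ‖x‖} \ {x | 2 < ‖x‖}, F x = 0 := by
    rw [hsplit] at hle
    by_contra h0
    exact absurd hle (ENNReal.lt_add_right hfin h0).not_ge
  have hpos : 0 < ∫⁻ x in {x | 1 < ‖x‖} \ {x | 2 < ‖x‖}, F x := by
    rw [setLIntegral_pos_iff hFm]
    have hsupp : Function.support F = univ := by
      ext x
      simp [hF, ENNReal.rpow_eq_zero_iff, hf.ne_zero, hf.ne_top]
    rw [hsupp, univ_inter]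
    have hopen : IsOpen {x : EuclideanSpace ℝ (Fin n) | 1 < ‖x‖ ∧ ‖x‖ < 2} :=
      (isOpen_lt continuous_const continuous_norm).inter (isOpen_lt continuous_norm continuous_const)
    obtain ⟨x, hx⟩ := exists_norm_eq (EuclideanSpace ℝ (Fin n))
      (show (0 : ℝ) ≤ 3 / 2 by norm_num)
    refine (hopen.measure_pos volume ⟨x, ?_⟩).trans_le (measure_mono fun y hy => ⟨hy.1, ?_⟩)
    · simp only [mem_ofPred_eq, hx]; norm_num
    · simp only [mem_ofPred_eq, not_lt]; exact hy.2.le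
  exact hpos.ne' hzero

theorem le_of_forall_leKelvin {c z y : EuclideanSpace ℝ (Fin n)} {t : ℝ} (ht : 0 < t)
    (hyz : y ≠ z) (hc : c = z - t • (y - z)) (h : ∀ R, 0 < R → LeKelvin α R fun x => f (c + x)) :
    f z ≤ ENNReal.ofReal √((t + 1) / t) ^ α * f y := by
  have hd : 0 < ‖y - z‖ := norm_pos_iff.2 (sub_ne_zero.2 hyz)
  have hr : 1 < √((t + 1) / t) := by
    rw [Real.lt_sqrt (by norm_num), lt_div_iff₀ ht]; linarith
  have hnorm : ‖t • (y - z)‖ = t * ‖y - z‖ := by rw [norm_smul, Real.norm_of_nonneg ht.le]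
  have hnp : 0 < t * ‖y - z‖ := by positivity
  have h1 := h (√((t + 1) / t) * (t * ‖y - z‖)) (by positivity) (t • (y - z))
    (norm_pos_iff.1 (hnorm ▸ hnp)) (by rw [hnorm]; nlinarith)
  have h3 : inversion 0 (√((t + 1) / t) * (t * ‖y - z‖)) (t • (y - z)) = (t + 1) • (y - z) := by
    rw [inversion_zero_eq_smul, hnorm, mul_pow, Real.sq_sqrt (by positivity), smul_smul]
    congr 1
    field_simp
  rw [kelvin, h3, hnorm, mul_div_assoc, div_self hnp.ne', mul_one, hc] at h1
  convert h1 using 2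
  · abel_nf
  · congr 1
    module

theorem exists_eq_kelvin_of_some_center [Nonempty (Fin n)] (hf : IsPotentialSolution α m f)
    (hαm : α * m = n) (hα : 0 < α) (hm : 1 < m) :
    ∃ c, ∃ R, 0 < R ∧ ∀ x, x ≠ 0 → f (c + x) = kelvin α R (fun x => f (c + x)) x := by
  by_contra hno
  push Not at hno
  have hall : ∀ c, ∀ R, 0 < R → LeKelvin α R fun x => f (c + x) := fun c => by
    rcases (hf.comp_add c).forall_leKelvin_or_exists_eq hαm hα hm with h | ⟨R, hR, h⟩
    · exact h
    · obtain ⟨x, hx, hne⟩ := hno c R hR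
      exact absurd (h x hx) hne
  have hle : ∀ y z, f z ≤ f y := by
    intro y z
    by_cases hyz : y = z
    · rw [hyz]
    have hlim : Tendsto (fun t : ℝ => ENNReal.ofReal √((t + 1) / t) ^ α * f y) atTop
        (𝓝 (ENNReal.ofReal √1 ^ α * f y)) := by
      refine ENNReal.Tendsto.mul_const ((ENNReal.continuous_rpow_const.tendsto _).comp
        (ENNReal.tendsto_ofReal ((Real.continuous_sqrt.tendsto _).comp ?_)))
        (Or.inr (hf.ne_top y))
      have h1 : Tendsto (fun t : ℝ => 1 + t⁻¹) atTop (𝓝 (1 + 0)) :=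
        tendsto_inv_atTop_zero.const_add 1
      rw [add_zero] at h1
      refine h1.congr' ?_
      filter_upwards [eventually_gt_atTop 0] with t ht
      field_simp
    simp only [Real.sqrt_one, ENNReal.ofReal_one, ENNReal.one_rpow, one_mul] at hlim
    refine ge_of_tendsto hlim ?_
    filter_upwards [eventually_gt_atTop 0] with t ht
    exact le_of_forall_leKelvin ht hyz rfl (hall _)
  have hconst : ∀ y, f y = f 0 := fun y => le_antisymm (hle _ _) (hle _ _)
  have heq := hf.eq_potential 0
  simp_rw [hconst, zero_sub, enorm_neg] at heq
  have hC0 := (ENNReal.rpow_pos (p := 2 * m - 1) (pos_iff_ne_zero.2 (hf.ne_zero 0)) (hf.ne_top 0)).ne'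
  have hCt := ENNReal.rpow_ne_top_of_ne_zero (hf.ne_zero 0) (hf.ne_top 0) (y := 2 * m - 1)
  rw [lintegral_mul_const' _ _ hCt] at heq
  obtain ⟨I, hI⟩ : ∃ I, I = ∫⁻ y : EuclideanSpace ℝ (Fin n), ‖y‖ₑ ^ (-α) := ⟨_, rfl⟩
  rw [← hI] at heq
  have hI0 : I ≠ 0 := fun h0 => hf.ne_zero 0 (by rw [heq, h0, zero_mul])
  have hIt : I ≠ ⊤ := fun h0 => hf.ne_top 0 (by rw [heq, h0, ENNReal.top_mul hC0])
  have hscale := two_pow_mul_lintegral_comp_two_smul (n := n) (G := fun y => ‖y‖ₑ ^ (-α))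
    (by fun_prop)
  have h2 : ∀ x : EuclideanSpace ℝ (Fin n),
      ‖(2 : ℝ) • x‖ₑ ^ (-α) = (2 : ℝ≥0∞) ^ (-α) * ‖x‖ₑ ^ (-α) := fun x => by
    rw [enorm_smul, ENNReal.mul_rpow_of_ne_top enorm_ne_top enorm_ne_top,
      Real.enorm_eq_ofReal (by norm_num), ENNReal.ofReal_ofNat]
  simp_rw [h2] at hscale
  rw [lintegral_const_mul _ (by fun_prop), ← hI, ← mul_assoc, ← ENNReal.rpow_natCast,
    ← ENNReal.rpow_add _ _ (by simp) (by simp)] at hscale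
  have hgt : (1 : ℝ≥0∞) < 2 ^ ((n : ℝ) + -α) :=
    ENNReal.one_lt_rpow (by norm_num) (by rw [← hαm]; nlinarith)
  have := (ENNReal.mul_left_inj hI0 hIt).1 (hscale.trans (one_mul I).symm)
  exact hgt.ne' this

theorem lintegral_rpow_ne_top [Nonempty (Fin n)] (hf : IsPotentialSolution α m f)
    (hαm : α * m = n) (hα : 0 < α) (hm : 1 < m) : ∫⁻ x, f x ^ (2 * m) ≠ ⊤ := by
  obtain ⟨c, R, hR, h⟩ := hf.exists_eq_kelvin_of_some_center hαm hα hm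
  have h1 := (hf.comp_add c).lintegral_ne_top_of_eq_kelvin hαm hm hR h
  rwa [lintegral_add_left_eq_self (μ := volume) (fun x => f x ^ (2 * m)) c] at h1

theorem exists_eq_kelvin [Nonempty (Fin n)] (hf : IsPotentialSolution α m f)
    (hαm : α * m = n) (hα : 0 < α) (hm : 1 < m) (c : EuclideanSpace ℝ (Fin n)) :
    ∃ R, 0 < R ∧ ∀ x, x ≠ 0 → f (c + x) = kelvin α R (fun x => f (c + x)) x :=
  ((hf.comp_add c).forall_leKelvin_or_exists_eq hαm hα hm).resolve_left
    ((hf.comp_add c).not_forall_leKelvin_of_lintegral_ne_top hαm hm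
      ((hf.comp_add c).lintegral_rpow_ne_top hαm hα hm))

theorem exists_uniform_leKelvin [Nonempty (Fin n)] (hf : IsPotentialSolution α m f)
    (hαm : α * m = n) (hα : 0 < α) (hm : 1 < m) :
    ∃ R₀, 0 < R₀ ∧ ∀ c R, 0 < R → R ≤ R₀ → LeKelvin α R fun x => f (c + x) := by
  obtain ⟨ε, hε, H⟩ := leKelvin_of_small (n := n) hαm hα hm
  obtain ⟨δ, hδ, hs⟩ := exists_pos_setLIntegral_lt_of_measure_lt
    (hf.lintegral_rpow_ne_top hαm hα hm) (ENNReal.ofReal_pos.2 hε).ne'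
  obtain ⟨r, hr0, hr⟩ := exists_pos_volume_ball_lt (n := n) hδ
  refine ⟨r, hr0, fun c R hR hRr => H _ (hf.comp_add c) r ?_ R hR hRr⟩
  rw [setLIntegral_ball_comp_add c r fun y => f y ^ (2 * m)]
  refine (hs _ ?_).le
  rwa [EuclideanSpace.volume_ball, ← EuclideanSpace.volume_ball (Fin n) 0]

end IsPotentialSolution

section InversionSymmetry

variable {E : Type*} [NormedAddCommGroup E] [InnerProductSpace ℝ E]

theorem le_mul_of_monotone_spheres {v : E → ℝ} {R₀ : ℝ} (hR₀ : 0 < R₀)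
    (H : ∀ c R, 0 < R → R ≤ R₀ → ∀ x, x ≠ 0 → ‖x‖ < R →
      (‖x‖ / R) ^ 2 * v (c + (R ^ 2 / ‖x‖ ^ 2) • x) ≤ v (c + x))
    {y z : E} (hyz : ‖z - y‖ ≤ R₀ / 2) : v z ≤ (1 + 2 / R₀ * ‖z - y‖) * v y := by
  by_cases hne : z - y = 0
  · rw [sub_eq_zero.1 hne]; simp
  obtain ⟨w, hw⟩ : ∃ w, w = z - y := ⟨_, rfl⟩
  rw [← hw] at hne hyz ⊢
  obtain ⟨d, hd⟩ : ∃ d, d = ‖w‖ := ⟨_, rfl⟩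
  have hd0 : 0 < d := hd ▸ norm_pos_iff.2 hne
  rw [← hd] at hyz ⊢
  obtain ⟨s, hs⟩ : ∃ s, s = R₀ / 2 / d := ⟨_, rfl⟩
  have hs0 : 0 < s := by rw [hs]; positivity
  have hsd : s * d = R₀ / 2 := by rw [hs]; field_simp
  have hnorm : ‖s • w‖ = s * d := by rw [norm_smul, Real.norm_of_nonneg hs0.le, hd]
  have hsq : √((s + 1) / s) ^ 2 = (s + 1) / s := Real.sq_sqrt (by positivity)
  have hgt : 1 < √((s + 1) / s) := by
    rw [Real.lt_sqrt (by norm_num), lt_div_iff₀ hs0]; linarith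
  have hR2 : (√((s + 1) / s) * (s * d)) ^ 2 = R₀ / 2 * (R₀ / 2 + d) := by
    rw [mul_pow, hsq, ← hsd]; field_simp
  have hle : √((s + 1) / s) * (s * d) ≤ R₀ := by
    rw [← sq_le_sq₀ (by positivity) hR₀.le, hR2]; nlinarith
  have h := H (y - s • w) (√((s + 1) / s) * (s * d)) (by positivity) hle (s • w)
    (smul_ne_zero hs0.ne' hne) (by rw [hnorm]; nlinarith [mul_pos hs0 hd0])
  have h1 : (‖s • w‖ / (√((s + 1) / s) * (s * d))) ^ 2 = s / (s + 1) := by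
    rw [hnorm, div_pow, mul_pow √((s + 1) / s), hsq]; field_simp
  have h2 : y - s • w + ((√((s + 1) / s) * (s * d)) ^ 2 / ‖s • w‖ ^ 2) • s • w = z := by
    rw [hnorm, mul_pow, hsq, smul_smul, show (s + 1) / s * (s * d) ^ 2 / (s * d) ^ 2 * s = s + 1 by
      field_simp, add_smul, one_smul, hw]
    abel
  rw [h1, h2, sub_add_cancel, div_mul_eq_mul_div, div_le_iff₀ (by positivity)] at h
  have h3 : 1 + 2 / R₀ * d = (s + 1) / s := by
    rw [hs]; field_simp
  rw [h3, div_mul_eq_mul_div, le_div_iff₀ hs0]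
  linarith

theorem lipschitzOnWith_log {v : E → ℝ} (hv : ∀ x, 0 < v x) {R₀ : ℝ} (hR₀ : 0 < R₀)
    (H : ∀ c R, 0 < R → R ≤ R₀ → ∀ x, x ≠ 0 → ‖x‖ < R →
      (‖x‖ / R) ^ 2 * v (c + (R ^ 2 / ‖x‖ ^ 2) • x) ≤ v (c + x)) (c : E) :
    LipschitzOnWith (Real.toNNReal (2 / R₀)) (fun x => Real.log (v x)) (ball c (R₀ / 4)) := by
  refine LipschitzOnWith.of_le_add_mul _ fun z hz y hy => ?_
  rw [Real.coe_toNNReal _ (by positivity), dist_eq_norm]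
  have hzy : ‖z - y‖ ≤ R₀ / 2 := by
    rw [← dist_eq_norm]
    have := dist_triangle_right z y c
    rw [mem_ball] at hz hy
    linarith
  have h := Real.log_le_log (hv z) (le_mul_of_monotone_spheres hR₀ H hzy)
  have h0 : 0 ≤ 2 / R₀ * ‖z - y‖ := by positivity
  rw [Real.log_mul (by positivity) (hv y).ne'] at h
  have := Real.log_le_sub_one_of_pos (show 0 < 1 + 2 / R₀ * ‖z - y‖ by positivity)
  linarith

theorem exists_limit_constant [Nontrivial E] {v : E → ℝ} (hv : ∀ x, 0 < v x)
    (hcont : Continuous v)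
    (H : ∀ c, ∃ R, 0 < R ∧ ∀ x, x ≠ 0 →
      v (c + x) = (‖x‖ / R) ^ 2 * v (c + (R ^ 2 / ‖x‖ ^ 2) • x)) :
    ∃ l, 0 < l ∧ ∀ c, ∃ R, 0 < R ∧ v c = l * R ^ 2 ∧ ∀ x, x ≠ 0 →
      v (c + x) = (‖x‖ / R) ^ 2 * v (c + (R ^ 2 / ‖x‖ ^ 2) • x) := by
  obtain ⟨e, he⟩ := exists_norm_eq E zero_le_one
  have key : ∀ c R, 0 < R → (∀ x, x ≠ 0 →
      v (c + x) = (‖x‖ / R) ^ 2 * v (c + (R ^ 2 / ‖x‖ ^ 2) • x)) →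
      Tendsto (fun t : ℝ => v (t • e) / t ^ 2) atTop (𝓝 (v c / R ^ 2)) := by
    intro c R hR h
    have hlim : Tendsto (fun t : ℝ => e - t⁻¹ • c) atTop (𝓝 e) := by
      simpa using ((tendsto_inv_atTop_zero (𝕜 := ℝ)).smul_const c).const_sub e
    have h1 : Tendsto (fun t : ℝ => ‖e - t⁻¹ • c‖) atTop (𝓝 1) := he ▸ hlim.norm
    have h2 : Tendsto (fun t : ℝ => c + (R ^ 2 / ‖e - t⁻¹ • c‖ ^ 2 * t⁻¹) • (e - t⁻¹ • c)) atTop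
        (𝓝 c) := by
      have := ((((tendsto_const_nhds (x := R ^ 2)).div (h1.pow 2) (by norm_num)).mul tendsto_inv_atTop_zero).smul
        hlim).const_add c
      simpa using this
    have h3 : Tendsto (fun t : ℝ => ‖e - t⁻¹ • c‖ ^ 2 *
        v (c + (R ^ 2 / ‖e - t⁻¹ • c‖ ^ 2 * t⁻¹) • (e - t⁻¹ • c)) / R ^ 2) atTop
        (𝓝 (v c / R ^ 2)) := by
      simpa using ((h1.pow 2).mul ((hcont.tendsto c).comp h2)).div_const (R ^ 2)
    refine h3.congr' ?_
    filter_upwards [eventually_gt_atTop 0, h1.eventually_ne one_ne_zero] with t ht hne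
    have hx : t • e - c = t • (e - t⁻¹ • c) := by
      rw [smul_sub, smul_inv_smul₀ ht.ne']
    have hnorm : ‖t • (e - t⁻¹ • c)‖ = t * ‖e - t⁻¹ • c‖ := by
      rw [norm_smul, Real.norm_of_nonneg ht.le]
    have hx0 : t • e - c ≠ 0 := by
      rw [hx]
      exact smul_ne_zero ht.ne' (norm_ne_zero_iff.1 hne)
    have h4 := h (t • e - c) hx0
    rw [add_sub_cancel, hx, hnorm, smul_smul] at h4
    rw [h4, show R ^ 2 / (t * ‖e - t⁻¹ • c‖) ^ 2 * t = R ^ 2 / ‖e - t⁻¹ • c‖ ^ 2 * t⁻¹ by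
      field_simp]
    field_simp
  obtain ⟨R₁, hR₁, h₁⟩ := H 0
  refine ⟨v 0 / R₁ ^ 2, div_pos (hv 0) (by positivity), fun c => ?_⟩
  obtain ⟨R, hR, h⟩ := H c
  refine ⟨R, hR, ?_, h⟩
  rw [tendsto_nhds_unique (key 0 R₁ hR₁ h₁) (key c R hR h)]
  field_simp

theorem hasFDerivAt_of_inversion_symmetry {v : E → ℝ} {l : ℝ} (hl : 0 < l)
    (H : ∀ c, ∃ R, 0 < R ∧ v c = l * R ^ 2 ∧ ∀ x, x ≠ 0 →
      v (c + x) = (‖x‖ / R) ^ 2 * v (c + (R ^ 2 / ‖x‖ ^ 2) • x))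
    {x₀ : E} {L : E →L[ℝ] ℝ} (hL : HasFDerivAt v L x₀) (c : E) :
    HasFDerivAt v ((2 * l) • innerSL ℝ (c - x₀) + L) c := by
  obtain ⟨R, hR, hvR, hR'⟩ := H c
  obtain ⟨S, hS, hvS, hS'⟩ := H x₀
  obtain ⟨b, hb⟩ : ∃ b, b = c - x₀ := ⟨_, rfl⟩
  rw [← hb]
  let A : E → ℝ := fun h => ‖h‖ ^ 2 * ‖b‖ ^ 2 + 2 * R ^ 2 * inner ℝ b h + R ^ 4
  let w : E → E := fun h => (S ^ 2 * (A h)⁻¹) • (‖h‖ ^ 2 • b + R ^ 2 • h)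
  have hA0 : A 0 = R ^ 4 := by simp [A]
  have hw0 : w 0 = 0 := by simp [w]
  have hsq : HasFDerivAt (fun h : E => ‖h‖ ^ 2) (0 : E →L[ℝ] ℝ) 0 := by
    simpa using (hasStrictFDerivAt_norm_sq (0 : E)).hasFDerivAt
  have hA : HasFDerivAt A ((2 * R ^ 2) • innerSL ℝ b) 0 := by
    have h1 := ((hsq.mul_const (‖b‖ ^ 2)).add
      (((innerSL ℝ b).hasFDerivAt (x := 0)).const_mul (2 * R ^ 2))).add_const (R ^ 4)
    refine h1.congr_fderiv ?_
    simp
  have hw : HasFDerivAt w ((S ^ 2 / R ^ 2) • ContinuousLinearMap.id ℝ E) 0 := by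
    have h1 : HasFDerivAt (fun h : E => ‖h‖ ^ 2 • b + R ^ 2 • h)
        (R ^ 2 • ContinuousLinearMap.id ℝ E) 0 := by
      have := (hsq.smul_const b).add ((hasFDerivAt_id (𝕜 := ℝ) (0 : E)).const_smul (R ^ 2))
      refine this.congr_fderiv ?_
      ext; simp
    have h2 : DifferentiableAt ℝ (fun h => S ^ 2 * (A h)⁻¹) 0 :=
      (hA.differentiableAt.inv (by rw [hA0]; positivity)).const_mul _
    have h3 := h2.hasFDerivAt.smul h1
    refine h3.congr_fderiv ?_
    ext h
    simp only [hA0, norm_zero, smul_zero, add_zero, _root_.add_apply,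
      _root_.smul_apply, ContinuousLinearMap.id_apply, smul_smul,
      ContinuousLinearMap.smulRight_apply]
    rw [zero_pow two_ne_zero, mul_zero, zero_smul, add_zero]
    congr 1
    field_simp
  have hcomp : HasFDerivAt (fun h => A h * (R ^ 2 * S ^ 2)⁻¹ * v (x₀ + w h))
      ((2 * l) • innerSL ℝ b + L) 0 := by
    have h1 : HasFDerivAt (fun h => v (x₀ + w h))
        (L.comp ((S ^ 2 / R ^ 2) • ContinuousLinearMap.id ℝ E)) 0 := by
      refine HasFDerivAt.comp (g := v) (0 : E) ?_ (hw.const_add x₀)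
      simpa [hw0] using hL
    have h2 := (hA.mul_const ((R ^ 2 * S ^ 2)⁻¹)).mul h1
    refine h2.congr_fderiv ?_
    ext h
    simp [hA0, hw0, hvS]
    field_simp
    ring
  have hev : ∀ᶠ h in 𝓝 (0 : E), v (c + h) = A h * (R ^ 2 * S ^ 2)⁻¹ * v (x₀ + w h) := by
    have hApos : ∀ᶠ h in 𝓝 (0 : E), 0 < A h :=
      hA.continuousAt.eventually_const_lt (by rw [hA0]; positivity)
    filter_upwards [hApos] with h hAh
    by_cases hh : h = 0
    · rw [hh, add_zero, hw0, add_zero, hA0, hvR, hvS]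
      field_simp
    have hhn : 0 < ‖h‖ := norm_pos_iff.2 hh
    obtain ⟨k, hk⟩ : ∃ k, k = b + (R ^ 2 / ‖h‖ ^ 2) • h := ⟨_, rfl⟩
    have hkA : ‖k‖ ^ 2 = A h / ‖h‖ ^ 2 := by
      rw [hk, norm_add_sq_real, norm_smul, inner_smul_right, Real.norm_of_nonneg (by positivity)]
      simp only [A]
      field_simp
    have hk0 : k ≠ 0 := by
      intro h0
      rw [h0, norm_zero] at hkA
      have : 0 < A h / ‖h‖ ^ 2 := by positivity
      linarith
    have e1 : c + (R ^ 2 / ‖h‖ ^ 2) • h = x₀ + k := by rw [hk, hb]; abel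
    have e2 : (S ^ 2 / ‖k‖ ^ 2) • k = w h := by
      rw [hkA, hk]
      simp only [w, smul_add, smul_smul]
      congr 2 <;> field_simp
    rw [hR' h hh, e1, hS' k hk0, e2, div_pow, div_pow, hkA]
    field_simp
  have hfin : HasFDerivAt (fun h => v (c + h)) ((2 * l) • innerSL ℝ b + L) 0 :=
    hcomp.congr_of_eventuallyEq hev
  have := (hasFDerivAt_comp_add_left (f := v) (x := 0) c).1 hfin
  simpa using this

theorem eq_quadratic_of_inversion_symmetry [CompleteSpace E] {v : E → ℝ} (hv : ∀ x, 0 < v x)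
    {l : ℝ} (hl : 0 < l)
    (H : ∀ c, ∃ R, 0 < R ∧ v c = l * R ^ 2 ∧ ∀ x, x ≠ 0 →
      v (c + x) = (‖x‖ / R) ^ 2 * v (c + (R ^ 2 / ‖x‖ ^ 2) • x))
    {x₀ : E} {L : E →L[ℝ] ℝ} (hL : HasFDerivAt v L x₀) :
    ∃ d, 0 < d ∧ ∃ ξ, ∀ x, v x = l * ‖x - ξ‖ ^ 2 + d := by
  have hD : ∀ c, HasFDerivAt (fun x => v x - (l * ‖x - x₀‖ ^ 2 + L (x - x₀))) (0 : E →L[ℝ] ℝ) c := by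
    intro c
    have h1 : HasFDerivAt (fun x : E => x - x₀) (ContinuousLinearMap.id ℝ E) c :=
      (hasFDerivAt_id c).sub_const x₀
    have h2 := (hasFDerivAt_of_inversion_symmetry hl H hL c).sub
      ((h1.norm_sq.const_mul l).add (L.hasFDerivAt.comp c h1))
    refine h2.congr_fderiv ?_
    ext h
    simp
    ring
  have hconst := is_const_of_fderiv_eq_zero (𝕜 := ℝ) (fun c => (hD c).differentiableAt)
    (fun c => (hD c).fderiv)
  obtain ⟨b, hb⟩ := (InnerProductSpace.toDual ℝ E).surjective L
  have hLb : ∀ x, L x = inner ℝ b x := fun x => by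
    rw [← hb, InnerProductSpace.toDual_apply_apply]
  have hform : ∀ x, v x = l * ‖x - (x₀ - (2 * l)⁻¹ • b)‖ ^ 2 +
      (v x₀ - ‖b‖ ^ 2 / (4 * l)) := by
    intro x
    have h1 := hconst x x₀
    simp only [sub_self, norm_zero, hLb] at h1
    rw [show x - (x₀ - (2 * l)⁻¹ • b) = (x - x₀) + (2 * l)⁻¹ • b by abel, norm_add_sq_real,
      inner_smul_right, norm_smul, Real.norm_of_nonneg (by positivity), real_inner_comm]
    have h2 : v x = l * ‖x - x₀‖ ^ 2 + inner ℝ b (x - x₀) + v x₀ := by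
      simp at h1
      linarith
    rw [h2]
    field_simp
    ring
  refine ⟨_, ?_, _, hform⟩
  have := hform (x₀ - (2 * l)⁻¹ • b)
  rw [sub_self, norm_zero] at this
  have h3 := hv (x₀ - (2 * l)⁻¹ • b)
  rw [this] at h3
  simpa using h3

theorem exists_eq_quadratic [FiniteDimensional ℝ E] [Nontrivial E] [MeasurableSpace E]
    [BorelSpace E] {v : E → ℝ} (hv : ∀ x, 0 < v x) {R₀ : ℝ} (hR₀ : 0 < R₀)
    (hmono : ∀ c R, 0 < R → R ≤ R₀ → ∀ x, x ≠ 0 → ‖x‖ < R →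
      (‖x‖ / R) ^ 2 * v (c + (R ^ 2 / ‖x‖ ^ 2) • x) ≤ v (c + x))
    (H : ∀ c, ∃ R, 0 < R ∧ ∀ x, x ≠ 0 →
      v (c + x) = (‖x‖ / R) ^ 2 * v (c + (R ^ 2 / ‖x‖ ^ 2) • x)) :
    ∃ l, 0 < l ∧ ∃ d, 0 < d ∧ ∃ ξ, ∀ x, v x = l * ‖x - ξ‖ ^ 2 + d := by
  have hlip := lipschitzOnWith_log hv hR₀ hmono
  have hexp : v = fun x => Real.exp (Real.log (v x)) := funext fun x => (Real.exp_log (hv x)).symm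
  have hcont : Continuous v := by
    rw [hexp]
    refine Real.continuous_exp.comp (continuous_iff_continuousAt.2 fun c => ?_)
    exact (hlip c).continuousOn.continuousAt (ball_mem_nhds c (by positivity))
  obtain ⟨l, hl, H'⟩ := exists_limit_constant hv hcont H
  obtain ⟨x₀, hx₀⟩ : ∃ x₀, DifferentiableAt ℝ v x₀ := by
    have hae := (hlip 0).ae_differentiableWithinAt_of_mem (μ := Measure.addHaar)
    have hpos : (Measure.addHaar (ball (0 : E) (R₀ / 4))) ≠ 0 :=
      (measure_ball_pos _ _ (by positivity)).ne'
    obtain ⟨x, hx, hd⟩ := (Filter.Eventually.and_frequently hae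
      (frequently_ae_mem_iff.2 hpos)).exists
    refine ⟨x, ?_⟩
    rw [hexp]
    exact ((hx hd).differentiableAt (isOpen_ball.mem_nhds hd)).exp
  obtain ⟨d, hd, ξ, h⟩ := eq_quadratic_of_inversion_symmetry hv hl H' hx₀.hasFDerivAt
  exact ⟨l, hl, d, hd, ξ, h⟩

end InversionSymmetry

theorem isPotentialSolution_ofReal {n : ℕ} [Nonempty (Fin n)] {α m : ℝ} (hm : 1 < m)
    {u : EuclideanSpace ℝ (Fin n) → ℝ} (hu : ∀ x, 0 < u x)
    (huloc : LocallyIntegrable (fun x => u x ^ (2 * m)) volume)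
    (hint : ∀ x, Integrable fun y => u y ^ (2 * m - 1) * ‖x - y‖ ^ (-α))
    (heq : ∀ x, u x = ∫ y, u y ^ (2 * m - 1) * ‖x - y‖ ^ (-α)) :
    IsPotentialSolution α m fun x => ENNReal.ofReal (u x) := by
  have hp : 0 < 2 * m - 1 := by linarith
  have hofpow : ∀ y, ENNReal.ofReal (u y) ^ (2 * m - 1) = ENNReal.ofReal (u y ^ (2 * m - 1)) :=
    fun y => ENNReal.ofReal_rpow_of_pos (hu y)
  have heq' : ∀ x, ENNReal.ofReal (u x) =
      ∫⁻ y, ‖x - y‖ₑ ^ (-α) * ENNReal.ofReal (u y) ^ (2 * m - 1) := fun x => by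
    rw [heq x, ofReal_integral_eq_lintegral_ofReal (hint x) (Eventually.of_forall fun y =>
      mul_nonneg (Real.rpow_nonneg (hu y).le _) (Real.rpow_nonneg (norm_nonneg _) _))]
    refine lintegral_congr_ae ?_
    filter_upwards [Measure.ae_ne volume x] with y hy
    have hxy : 0 < ‖x - y‖ := norm_pos_iff.2 (sub_ne_zero.2 hy.symm)
    rw [hofpow, ← ofReal_norm, ENNReal.ofReal_rpow_of_pos hxy, mul_comm,
      ENNReal.ofReal_mul (Real.rpow_nonneg hxy.le _)]
  have hupow : AEMeasurable fun y => u y ^ (2 * m - 1) := by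
    have h1 : AEMeasurable fun y : EuclideanSpace ℝ (Fin n) =>
        u y ^ (2 * m - 1) * ‖0 - y‖ ^ (-α) * ‖0 - y‖ ^ α :=
      (hint 0).aestronglyMeasurable.aemeasurable.mul (by fun_prop)
    refine h1.congr ?_
    filter_upwards [Measure.ae_ne volume 0] with y hy
    have hy0 : 0 < ‖0 - y‖ := norm_pos_iff.2 (sub_ne_zero.2 hy.symm)
    rw [mul_assoc, ← Real.rpow_add hy0, neg_add_cancel, Real.rpow_zero, mul_one]
  obtain ⟨G, hG, hGu⟩ : AEMeasurable fun y => ENNReal.ofReal (u y) ^ (2 * m - 1) := by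
    simp_rw [hofpow]
    exact hupow.ennreal_ofReal
  refine ⟨?_, fun x => (ENNReal.ofReal_pos.2 (hu x)).ne', fun x => ENNReal.ofReal_ne_top,
    heq', fun R => ?_⟩
  · have h1 : (fun x => ENNReal.ofReal (u x)) = fun x => ∫⁻ y, ‖x - y‖ₑ ^ (-α) * G y := by
      funext x
      rw [heq' x]
      refine lintegral_congr_ae ?_
      filter_upwards [hGu] with y hy
      rw [hy]
    rw [h1]
    have h2 : Measurable fun q : EuclideanSpace ℝ (Fin n) × EuclideanSpace ℝ (Fin n) =>
        ‖q.1 - q.2‖ₑ ^ (-α) * G q.2 := by fun_prop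
    exact h2.lintegral_prod_right'
  · have h1 : IntegrableOn (fun x => u x ^ (2 * m)) (ball 0 R) :=
      (huloc.integrableOn_isCompact (isCompact_closedBall 0 R)).mono_set ball_subset_closedBall
    simp_rw [ENNReal.ofReal_rpow_of_pos (hu _)]
    exact h1.lintegral_lt_top.ne

theorem kelvin_ofReal {n : ℕ} {α R : ℝ} {u : EuclideanSpace ℝ (Fin n) → ℝ}
    (hR : 0 < R) {x : EuclideanSpace ℝ (Fin n)} (hx : x ≠ 0) :
    kelvin α R (fun x => ENNReal.ofReal (u x)) x =
      ENNReal.ofReal ((R / ‖x‖) ^ α * u ((R ^ 2 / ‖x‖ ^ 2) • x)) := by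
  have hx0 : 0 < ‖x‖ := norm_pos_iff.2 hx
  rw [kelvin, inversion_zero_eq_smul, ENNReal.ofReal_rpow_of_pos (by positivity),
    ENNReal.ofReal_mul (by positivity)]

theorem div_rpow_mul_rpow {α R r b : ℝ} (hα : 0 < α) (hR : 0 < R) (hr : 0 < r) (hb : 0 < b) :
    ((R / r) ^ α * b) ^ (-2 / α) = (r / R) ^ 2 * b ^ (-2 / α) := by
  rw [Real.mul_rpow (by positivity) hb.le, ← Real.rpow_mul (by positivity),
    mul_div_cancel₀ _ hα.ne', Real.rpow_neg (by positivity), Real.rpow_two, ← inv_pow, inv_div]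

theorem eq_bubble_of_rpow_eq_quadratic {E : Type*} [NormedAddCommGroup E] {α : ℝ} (hα : 0 < α)
    {u : E → ℝ} (hu : ∀ x, 0 < u x) {l d : ℝ} (hl : 0 < l) (hd : 0 < d) {ξ : E}
    (h : ∀ x, u x ^ (-2 / α) = l * ‖x - ξ‖ ^ 2 + d) :
    ∃ c, 0 < c ∧ ∃ μ, 0 < μ ∧ ∃ ξ : E, ∀ x,
      u x = c * (μ / (μ ^ 2 + ‖x - ξ‖ ^ 2)) ^ (α / 2) := by
  have hμ : 0 < √(d / l) := by positivity
  refine ⟨(l * √(d / l)) ^ (-(α / 2)), by positivity, √(d / l), hμ, ξ, fun x => ?_⟩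
  have h1 : u x = (l * ‖x - ξ‖ ^ 2 + d) ^ (-(α / 2)) := by
    rw [← h, ← Real.rpow_mul (hu x).le, show -2 / α * -(α / 2) = 1 by field_simp, Real.rpow_one]
  have hsq : √(d / l) ^ 2 = d / l := Real.sq_sqrt (by positivity)
  have h2 : √(d / l) / (√(d / l) ^ 2 + ‖x - ξ‖ ^ 2) =
      (l * √(d / l)) * (l * ‖x - ξ‖ ^ 2 + d)⁻¹ := by
    rw [hsq]; field_simp; ring
  have hB : 0 ≤ l * √(d / l) := by positivity
  rw [h1, h2, Real.mul_rpow hB (by positivity), ← mul_assoc,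
    ← Real.rpow_add (by positivity), neg_add_cancel, Real.rpow_zero, one_mul,
    Real.inv_rpow (by positivity), ← Real.rpow_neg (by positivity)]

theorem exists_eq_bubble {n : ℕ} [Nonempty (Fin n)] {α m : ℝ} (hα : 0 < α) (hm : 1 < m)
    (hαm : α * m = n) {u : EuclideanSpace ℝ (Fin n) → ℝ} (hu : ∀ x, 0 < u x)
    (hf : IsPotentialSolution α m fun x => ENNReal.ofReal (u x)) :
    ∃ c, 0 < c ∧ ∃ μ, 0 < μ ∧ ∃ ξ : EuclideanSpace ℝ (Fin n), ∀ x,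
      u x = c * (μ / (μ ^ 2 + ‖x - ξ‖ ^ 2)) ^ (α / 2) := by
  obtain ⟨R₀, hR₀, hmono⟩ := hf.exists_uniform_leKelvin hαm hα hm
  have hA : ∀ c R, 0 < R → R ≤ R₀ → ∀ x, x ≠ 0 → ‖x‖ < R →
      (‖x‖ / R) ^ 2 * u (c + (R ^ 2 / ‖x‖ ^ 2) • x) ^ (-2 / α) ≤ u (c + x) ^ (-2 / α) := by
    intro c R hR hRR x hx hxR
    have hx0 : 0 < ‖x‖ := norm_pos_iff.2 hx
    have h1 := hmono c R hR hRR x hx hxR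
    rw [kelvin_ofReal (u := fun x => u (c + x)) hR hx, ENNReal.ofReal_le_ofReal_iff
      (mul_nonneg (by positivity) (hu _).le)] at h1
    rw [← div_rpow_mul_rpow hα hR hx0 (hu _)]
    exact Real.rpow_le_rpow_of_nonpos (hu _) h1
      (div_nonpos_of_nonpos_of_nonneg (by norm_num) hα.le)
  have hB : ∀ c, ∃ R, 0 < R ∧ ∀ x, x ≠ 0 →
      u (c + x) ^ (-2 / α) = (‖x‖ / R) ^ 2 * u (c + (R ^ 2 / ‖x‖ ^ 2) • x) ^ (-2 / α) := by
    intro c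
    obtain ⟨R, hR, h⟩ := hf.exists_eq_kelvin hαm hα hm c
    refine ⟨R, hR, fun x hx => ?_⟩
    have hx0 : 0 < ‖x‖ := norm_pos_iff.2 hx
    have h1 := h x hx
    rw [kelvin_ofReal (u := fun x => u (c + x)) hR hx, ENNReal.ofReal_eq_ofReal_iff
      (hu _).le (mul_nonneg (by positivity) (hu _).le)] at h1
    rw [h1, div_rpow_mul_rpow hα hR hx0 (hu _)]
  obtain ⟨l, hl, d, hd, ξ, h⟩ := exists_eq_quadratic (v := fun x => u x ^ (-2 / α))
    (fun x => Real.rpow_pos_of_pos (hu x) _) hR₀ hA hB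
  exact eq_bubble_of_rpow_eq_quadratic hα hu hl hd h

end

theorem stmt16 (n : ℕ) (hn : 1 ≤ n) (γ : ℝ) (hγ : 0 < γ) (hγn : γ < (n : ℝ) / 2)
    (p : ℝ) (hp : p = ((n : ℝ) + 2 * γ) / ((n : ℝ) - 2 * γ))
    (u : EuclideanSpace ℝ (Fin n) → ℝ) (hu : ∀ x, 0 < u x)
    (huloc : LocallyIntegrable
      (fun x : EuclideanSpace ℝ (Fin n) => u x ^ (2 * (n : ℝ) / ((n : ℝ) - 2 * γ))) volume)
    (hint : ∀ x : EuclideanSpace ℝ (Fin n),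
      Integrable (fun y : EuclideanSpace ℝ (Fin n) =>
        u y ^ p * ‖x - y‖ ^ (-((n : ℝ) - 2 * γ))))
    (heq : ∀ x : EuclideanSpace ℝ (Fin n),
      u x = ∫ y : EuclideanSpace ℝ (Fin n), u y ^ p * ‖x - y‖ ^ (-((n : ℝ) - 2 * γ))) :
    ∃ (c : ℝ), 0 < c ∧ ∃ (μ : ℝ), 0 < μ ∧ ∃ ξ : EuclideanSpace ℝ (Fin n),
      ∀ x, u x = c * (μ / (μ ^ 2 + ‖x - ξ‖ ^ 2)) ^ (((n : ℝ) - 2 * γ) / 2) := by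
  have : Nonempty (Fin n) := ⟨⟨0, hn⟩⟩
  have hα : 0 < (n : ℝ) - 2 * γ := by linarith
  have hm : 1 < (n : ℝ) / (n - 2 * γ) := by
    rw [lt_div_iff₀ hα]; linarith
  have hp' : p = 2 * (n / (n - 2 * γ)) - 1 := by
    rw [hp]; field_simp; ring
  rw [mul_div_assoc] at huloc
  rw [hp'] at hint heq
  exact exists_eq_bubble hα hm (mul_div_cancel₀ _ hα.ne') hu
    (isPotentialSolution_ofReal hm hu huloc hint heq)
end

section
/- Let γ ∈ (0, n/2). There exists a constant S > 0 such that for every Schwartz function u : ℝⁿ → ℂ one has S (∫_{ℝⁿ} |u(x)|^{2n/(n−2γ)} dx)^{(n−2γ)/n} ≤ ∫_{ℝⁿ} |ξ|^{2γ} |û(ξ)|² dξ, where û denotes the Fourier transform of u. -/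
open MeasureTheory
open scoped FourierTransform

section
open Set Metric SchwartzMap

variable {E : Type*} [NormedAddCommGroup E] [InnerProductSpace ℝ E] [FiniteDimensional ℝ E]

lemma SchwartzMap.exists_add_eq_of_norm_le_indicator (f : 𝓢(E, ℂ)) {A : ℝ} (hA : 0 < A) :
    ∃ g h : 𝓢(E, ℂ), g + h = f ∧ (∀ x, ‖g x‖ ≤ (ball 0 (2 * A)).indicator (fun x ↦ ‖f x‖) x) ∧
      ∀ x, ‖h x‖ ≤ {x | A ≤ ‖x‖}.indicator (fun x ↦ ‖f x‖) x := by
  let φ : ContDiffBump (0 : E) := ⟨A, 2 * A, hA, by linarith⟩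
  have hφ : (fun x ↦ φ x).HasTemperateGrowth := φ.hasCompactSupport.hasTemperateGrowth φ.contDiff
  have hg x : smulLeftCLM ℂ φ f x = φ x • f x := smulLeftCLM_apply_apply hφ f x
  refine ⟨smulLeftCLM ℂ φ f, f - smulLeftCLM ℂ φ f, by simp, fun x ↦ ?_, fun x ↦ ?_⟩
  · rw [hg, norm_smul, Real.norm_of_nonneg φ.nonneg]
    by_cases hx : x ∈ ball (0 : E) (2 * A)
    · rw [indicator_of_mem hx]
      exact mul_le_of_le_one_left (norm_nonneg _) φ.le_one
    · rw [indicator_of_notMem hx, φ.zero_of_le_dist (by simpa [φ] using hx), zero_mul]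
  · rw [sub_apply, hg]
    by_cases hx : A ≤ ‖x‖
    · rw [indicator_of_mem (by exact hx), show f x - φ x • f x = (1 - φ x) • f x by
        rw [sub_smul, one_smul], norm_smul, Real.norm_of_nonneg (sub_nonneg.2 φ.le_one)]
      exact mul_le_of_le_one_left (norm_nonneg _) (by linarith [φ.nonneg' x])
    · rw [indicator_of_notMem (by exact hx), φ.one_of_mem_closedBall
        (by simpa [φ] using (not_le.1 hx).le)]
      simp

variable [MeasurableSpace E] [BorelSpace E]

lemma integrableOn_ball_norm_rpow_neg (hd : 1 ≤ Module.finrank ℝ E) {a : ℝ}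
    (ha : a < Module.finrank ℝ E) (R : ℝ) :
    IntegrableOn (fun x : E ↦ ‖x‖ ^ (-a)) (ball 0 R) := by
  refine integrableOn_ball_of_norm_le_rpow (C := 1) hd ha (.of_forall fun x ↦ ?_) ?_
  · rw [Real.norm_of_nonneg (by positivity), one_mul]
  · exact (measurable_norm.pow_const _).aestronglyMeasurable

lemma setIntegral_ball_norm_rpow_neg (a : ℝ) {R : ℝ} (hR : 0 < R) :
    ∫ x in ball (0 : E) R, ‖x‖ ^ (-a) =
      R ^ (Module.finrank ℝ E - a) * ∫ x in ball (0 : E) 1, ‖x‖ ^ (-a) := by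
  have h := Measure.setIntegral_comp_smul_of_pos (volume : Measure E)
    (fun x : E ↦ ‖x‖ ^ (-a)) (ball 0 1) hR
  rw [smul_unitBall_of_pos hR] at h
  simp_rw [norm_smul, Real.norm_of_nonneg hR.le, Real.mul_rpow hR.le (norm_nonneg _)] at h
  rw [integral_const_mul, smul_eq_mul, eq_inv_mul_iff_mul_eq₀ (by positivity)] at h
  rw [← h, ← mul_assoc, sub_eq_add_neg, Real.rpow_add hR, Real.rpow_natCast]

lemma SchwartzMap.integrable_norm_rpow_mul_norm_sq (f : 𝓢(E, ℂ)) {a : ℝ} (ha : 0 ≤ a) :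
    Integrable (fun x ↦ ‖x‖ ^ a * ‖f x‖ ^ 2) := by
  obtain ⟨C, hC⟩ := f.decay 0 0
  have hC' : ∀ x, ‖f x‖ ≤ C := fun x ↦ by simpa using hC.2 x
  have h0 := f.integrable_pow_mul volume 0
  have hk := f.integrable_pow_mul volume ⌈a⌉₊
  refine ((h0.add hk).const_mul C).mono' ?_ (.of_forall fun x ↦ ?_)
  · exact ((measurable_norm.pow_const _).mul
      (f.continuous.measurable.norm.pow_const _)).aestronglyMeasurable
  · have h1 : ‖x‖ ^ a ≤ 1 + ‖x‖ ^ ⌈a⌉₊ := by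
      rcases le_total ‖x‖ 1 with h | h
      · have := Real.rpow_le_one (norm_nonneg x) h ha
        have : 0 ≤ ‖x‖ ^ ⌈a⌉₊ := by positivity
        linarith
      · have := Real.rpow_le_rpow_of_exponent_le h (Nat.le_ceil a)
        rw [Real.rpow_natCast] at this
        linarith
    rw [Real.norm_of_nonneg (by positivity)]
    calc ‖x‖ ^ a * ‖f x‖ ^ 2 ≤ (1 + ‖x‖ ^ ⌈a⌉₊) * (C * ‖f x‖) := by
          rw [pow_two]; gcongr; exact hC' x
      _ = _ := by simp only [Pi.add_apply, pow_zero]; ring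

lemma SchwartzMap.integral_norm_le_of_support_ball (hd : 1 ≤ Module.finrank ℝ E) {γ : ℝ}
    (hγ : 0 < γ) (hγd : 2 * γ < Module.finrank ℝ E) (f g : 𝓢(E, ℂ)) {A M : ℝ} (hA : 0 < A)
    (hM : 0 < M) (hfM : ∫ x, ‖x‖ ^ (2 * γ) * ‖f x‖ ^ 2 ≤ M ^ 2)
    (hg : ∀ x, ‖g x‖ ≤ (ball 0 (2 * A)).indicator (fun x ↦ ‖f x‖) x) :
    ∫ x, ‖g x‖ ≤ ((2 : ℝ) ^ (Module.finrank ℝ E - 2 * γ) *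
      (∫ x in ball (0 : E) 1, ‖x‖ ^ (-(2 * γ))) + 1) / 2 * M *
        A ^ ((Module.finrank ℝ E - 2 * γ) / 2) := by
  have : Nontrivial E := Module.nontrivial_of_finrank_pos (R := ℝ) hd
  set s := Module.finrank ℝ E - 2 * γ with hs
  set t := M * A ^ (-(s / 2)) with ht
  have ht0 : 0 < t := by positivity
  have hI1 := integrableOn_ball_norm_rpow_neg (E := E) hd hγd (2 * A)
  have hI2 := f.integrable_norm_rpow_mul_norm_sq (a := 2 * γ) (by positivity)
  have hI1' := hI1.integrable_indicator measurableSet_ball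
  calc ∫ x, ‖g x‖ ≤ ∫ x, (t / 2 * (ball 0 (2 * A)).indicator (fun x ↦ ‖x‖ ^ (-(2 * γ))) x +
        t⁻¹ / 2 * (‖x‖ ^ (2 * γ) * ‖f x‖ ^ 2)) := by
        refine integral_mono_ae g.integrable.norm ((hI1'.const_mul _).add (hI2.const_mul _)) ?_
        have h0 : ∀ᵐ x : E, x ≠ 0 := by simp [ae_iff]
        filter_upwards [h0] with x hx
        refine (hg x).trans ?_
        by_cases hxb : x ∈ ball (0 : E) (2 * A)
        · rw [indicator_of_mem hxb, indicator_of_mem hxb]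
          have hw : 0 < ‖x‖ ^ γ := Real.rpow_pos_of_pos (norm_pos_iff.2 hx) _
          rw [Real.rpow_neg (norm_nonneg _), mul_comm 2 γ, Real.rpow_mul (norm_nonneg _),
            Real.rpow_two]
          have h := sq_nonneg (t * (‖x‖ ^ γ)⁻¹ - ‖x‖ ^ γ * ‖f x‖)
          have h2 : t / 2 * ((‖x‖ ^ γ) ^ 2)⁻¹ + t⁻¹ / 2 * ((‖x‖ ^ γ) ^ 2 * ‖f x‖ ^ 2) - ‖f x‖ =
              t⁻¹ / 2 * (t * (‖x‖ ^ γ)⁻¹ - ‖x‖ ^ γ * ‖f x‖) ^ 2 := by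
            field_simp
            ring
          have : 0 ≤ t⁻¹ / 2 * (t * (‖x‖ ^ γ)⁻¹ - ‖x‖ ^ γ * ‖f x‖) ^ 2 := by positivity
          linarith
        · rw [indicator_of_notMem hxb, indicator_of_notMem hxb]
          positivity
    _ = t / 2 * ((2 * A) ^ s * ∫ x in ball (0 : E) 1, ‖x‖ ^ (-(2 * γ))) +
        t⁻¹ / 2 * ∫ x, ‖x‖ ^ (2 * γ) * ‖f x‖ ^ 2 := by
        rw [integral_add (hI1'.const_mul _) (hI2.const_mul _), integral_const_mul,
          integral_const_mul, integral_indicator measurableSet_ball,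
          setIntegral_ball_norm_rpow_neg _ (by positivity)]
    _ ≤ t / 2 * ((2 * A) ^ s * ∫ x in ball (0 : E) 1, ‖x‖ ^ (-(2 * γ))) + t⁻¹ / 2 * M ^ 2 := by
        gcongr
    _ = _ := by
        rw [Real.mul_rpow (by norm_num) hA.le, ht, Real.rpow_neg hA.le,
          show A ^ s = (A ^ (s / 2)) ^ 2 by rw [← Real.rpow_two, ← Real.rpow_mul hA.le]; ring_nf]
        have : 0 < A ^ (s / 2) := by positivity
        field_simp

lemma SchwartzMap.meas_norm_gt_le (hd : 1 ≤ Module.finrank ℝ E) {γ : ℝ}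
    (hγ : 0 < γ) (hγd : 2 * γ < Module.finrank ℝ E) :
    ∃ c : ℝ, 0 < c ∧ ∀ (u : 𝓢(E, ℂ)) (M : ℝ), 0 < M →
      ∫ x, ‖x‖ ^ (2 * γ) * ‖𝓕 u x‖ ^ 2 ≤ M ^ 2 → ∀ t : ℝ, 0 < t →
      volume {x | t < ‖u x‖} ≤ ENNReal.ofReal (4 / t ^ 2) *
        ∫⁻ ξ in {ξ | t ≤ c * M * ‖ξ‖ ^ ((Module.finrank ℝ E - 2 * γ) / 2)},
          ENNReal.ofReal (‖𝓕 u ξ‖ ^ 2) := by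
  have h := fun (f g : 𝓢(E, ℂ)) (A M : ℝ) ↦
    integral_norm_le_of_support_ball hd hγ hγd f g (A := A) (M := M)
  have hc : 0 < ((2 : ℝ) ^ (Module.finrank ℝ E - 2 * γ) *
      (∫ x in ball (0 : E) 1, ‖x‖ ^ (-(2 * γ))) + 1) / 2 := by
    have : 0 ≤ ∫ x in ball (0 : E) 1, ‖x‖ ^ (-(2 * γ)) := integral_nonneg fun x ↦ by positivity
    positivity
  generalize ((2 : ℝ) ^ (Module.finrank ℝ E - 2 * γ) *
      (∫ x in ball (0 : E) 1, ‖x‖ ^ (-(2 * γ))) + 1) / 2 = c at h hc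
  refine ⟨2 * c, by positivity, fun u M hM huM t ht ↦ ?_⟩
  set b := (Module.finrank ℝ E - 2 * γ) / 2 with hb
  have hb0 : 0 < b := by rw [hb]; linarith
  set A := (t / (2 * c * M)) ^ b⁻¹ with hA
  have hA0 : 0 < A := by positivity
  have hAb : A ^ b = t / (2 * c * M) := by
    rw [hA, ← Real.rpow_mul (by positivity), inv_mul_cancel₀ hb0.ne', Real.rpow_one]
  obtain ⟨g, k, hgk, hg, hk⟩ := (𝓕 u).exists_add_eq_of_norm_le_indicator hA0
  have hlow x : ‖𝓕⁻ g x‖ ≤ t / 2 := by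
    calc ‖𝓕⁻ g x‖ ≤ ∫ ξ, ‖g ξ‖ := by
          rw [fourierInv_coe, Real.fourierInv_eq]
          exact (norm_integral_le_integral_norm _).trans_eq (by simp)
      _ ≤ c * M * A ^ b := h _ _ _ _ hA0 hM huM hg
      _ = t / 2 := by rw [hAb]; field_simp
  have hu x : u x = 𝓕⁻ g x + 𝓕⁻ k x := by
    rw [← add_apply, ← FourierTransform.fourierInv_add, hgk, FourierTransform.fourierInv_fourier_eq]
  have hset : {ξ : E | A ≤ ‖ξ‖} = {ξ | t ≤ 2 * c * M * ‖ξ‖ ^ b} := by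
    ext ξ
    simp only [mem_ofPred_eq]
    rw [← Real.rpow_le_rpow_iff hA0.le (norm_nonneg _) hb0, hAb, div_le_iff₀' (by positivity)]
  have hk2 : ∫⁻ x, ENNReal.ofReal (‖𝓕⁻ k x‖ ^ 2) ≤
      ∫⁻ ξ in {ξ | A ≤ ‖ξ‖}, ENNReal.ofReal (‖𝓕 u ξ‖ ^ 2) := by
    have hint (v : 𝓢(E, ℂ)) : Integrable fun x ↦ ‖v x‖ ^ 2 := by
      simpa using v.integrable_norm_rpow_mul_norm_sq le_rfl
    rw [← ofReal_integral_eq_lintegral_ofReal (hint _) (.of_forall fun x ↦ by positivity),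
      ← integral_norm_sq_fourier (𝓕⁻ k), FourierTransform.fourier_fourierInv_eq,
      ofReal_integral_eq_lintegral_ofReal (hint _) (.of_forall fun x ↦ by positivity),
      ← lintegral_indicator (measurableSet_le measurable_const measurable_norm)]
    refine lintegral_mono fun ξ ↦ ?_
    have := hk ξ
    by_cases hξ : ξ ∈ {ξ : E | A ≤ ‖ξ‖}
    · rw [indicator_of_mem hξ] at this ⊢
      exact ENNReal.ofReal_le_ofReal (by gcongr)
    · rw [indicator_of_notMem hξ] at this ⊢
      simp [norm_le_zero_iff.1 this]
  rw [← hset]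
  calc volume {x | t < ‖u x‖}
      ≤ volume {x | ENNReal.ofReal (t ^ 2 / 4) ≤ ENNReal.ofReal (‖𝓕⁻ k x‖ ^ 2)} := by
        refine measure_mono fun x (hx : t < ‖u x‖) ↦ ENNReal.ofReal_le_ofReal ?_
        have h1 := hlow x
        have h2 := norm_add_le (𝓕⁻ g x) (𝓕⁻ k x)
        rw [← hu] at h2
        have : t / 2 ≤ ‖𝓕⁻ k x‖ := by linarith
        calc t ^ 2 / 4 = (t / 2) ^ 2 := by ring
          _ ≤ _ := by gcongr
    _ ≤ (∫⁻ x, ENNReal.ofReal (‖𝓕⁻ k x‖ ^ 2)) / ENNReal.ofReal (t ^ 2 / 4) :=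
        meas_ge_le_lintegral_div
          ((𝓕⁻ k).continuous.measurable.norm.pow_const 2).ennreal_ofReal.aemeasurable
          (by simpa using by positivity) ENNReal.ofReal_ne_top
    _ ≤ _ := by
        rw [div_eq_mul_inv, mul_comm, ← ENNReal.ofReal_inv_of_pos (by positivity), inv_div]
        gcongr

lemma SchwartzMap.lintegral_norm_rpow_le (hd : 1 ≤ Module.finrank ℝ E) {γ : ℝ}
    (hγ : 0 < γ) (hγd : 2 * γ < Module.finrank ℝ E) :
    ∃ K : ℝ, 0 < K ∧ ∀ (u : 𝓢(E, ℂ)) (M : ℝ), 0 < M →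
      ∫ x, ‖x‖ ^ (2 * γ) * ‖𝓕 u x‖ ^ 2 ≤ M ^ 2 →
      ∫⁻ x, ENNReal.ofReal (‖u x‖ ^ (2 * Module.finrank ℝ E / (Module.finrank ℝ E - 2 * γ))) ≤
        ENNReal.ofReal (K * M ^ (2 * Module.finrank ℝ E / (Module.finrank ℝ E - 2 * γ) - 2) *
          ∫ x, ‖x‖ ^ (2 * γ) * ‖𝓕 u x‖ ^ 2) := by
  obtain ⟨c, hc, H⟩ := meas_norm_gt_le hd hγ hγd
  set d : ℝ := (Module.finrank ℝ E : ℝ)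
  set p := 2 * d / (d - 2 * γ) with hp
  have hs : 0 < d - 2 * γ := by linarith
  have hq : 0 < p - 2 := by
    rw [hp, sub_pos, lt_div_iff₀ hs]; linarith
  have hbq : (d - 2 * γ) / 2 * (p - 2) = 2 * γ := by
    rw [hp]; field_simp; ring
  refine ⟨4 * p / (p - 2) * c ^ (p - 2), by positivity, fun u M hM huM ↦ ?_⟩
  set F : E → ENNReal := fun ξ ↦ ENNReal.ofReal (‖𝓕 u ξ‖ ^ 2)
  have hF : Measurable F := ((𝓕 u).continuous.measurable.norm.pow_const 2).ennreal_ofReal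
  set ψ : E → ℝ := fun ξ ↦ c * M * ‖ξ‖ ^ ((d - 2 * γ) / 2)
  have hψ : Measurable ψ := (measurable_norm.pow_const _).const_mul _
  have hψ0 ξ : 0 ≤ ψ ξ := by positivity
  have key := lintegral_rpow_eq_lintegral_meas_le_mul (volume.withDensity F)
    (.of_forall hψ0) hψ.aemeasurable hq
  rw [lintegral_rpow_eq_lintegral_meas_lt_mul volume (.of_forall fun x ↦ norm_nonneg (u x))
    u.continuous.measurable.norm.aemeasurable (by linarith)]
  calc ENNReal.ofReal p *
        ∫⁻ t in Ioi 0, volume {x | t < ‖u x‖} * ENNReal.ofReal (t ^ (p - 1))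
      ≤ ENNReal.ofReal p * ∫⁻ t in Ioi 0, 4 * (volume.withDensity F {ξ | t ≤ ψ ξ} *
          ENNReal.ofReal (t ^ (p - 2 - 1))) := by
        gcongr ENNReal.ofReal p * ?_
        refine setLIntegral_mono' measurableSet_Ioi fun t (ht : 0 < t) ↦ ?_
        rw [withDensity_apply _ (measurableSet_le measurable_const hψ)]
        refine (mul_le_mul_left (H u M hM huM t ht) _).trans_eq ?_
        rw [show p - 1 = 2 + (p - 2 - 1) by ring, Real.rpow_add ht, Real.rpow_two,
          ENNReal.ofReal_mul (by positivity), ENNReal.ofReal_div_of_pos (by positivity),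
          show ENNReal.ofReal 4 = 4 by simp]
        have h1 : ENNReal.ofReal (t ^ 2) ≠ 0 := by simpa using by positivity
        calc _ = 4 * ((ENNReal.ofReal (t ^ 2))⁻¹ * ENNReal.ofReal (t ^ 2)) *
              ((∫⁻ ξ in {ξ | t ≤ ψ ξ}, F ξ) * ENNReal.ofReal (t ^ (p - 2 - 1))) := by
              rw [div_eq_mul_inv]; ring
          _ = _ := by rw [ENNReal.inv_mul_cancel h1 ENNReal.ofReal_ne_top, mul_one]
    _ = ENNReal.ofReal (4 * p / (p - 2)) * (ENNReal.ofReal (p - 2) *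
          ∫⁻ t in Ioi 0, volume.withDensity F {ξ | t ≤ ψ ξ} *
            ENNReal.ofReal (t ^ (p - 2 - 1))) := by
        rw [lintegral_const_mul' _ _ (by simp), ← mul_assoc, ← mul_assoc,
          ← ENNReal.ofReal_mul (by positivity), div_mul_cancel₀ _ hq.ne',
          ENNReal.ofReal_mul (by norm_num), show ENNReal.ofReal 4 = 4 by simp, mul_comm 4]
    _ = ENNReal.ofReal (4 * p / (p - 2)) * ∫⁻ ξ, ENNReal.ofReal ((c * M) ^ (p - 2)) *
          ENNReal.ofReal (‖ξ‖ ^ (2 * γ) * ‖𝓕 u ξ‖ ^ 2) := by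
        rw [← key, lintegral_withDensity_eq_lintegral_mul _ hF (hψ.pow_const _).ennreal_ofReal]
        congr 1
        refine lintegral_congr fun ξ ↦ ?_
        simp only [Pi.mul_apply, F, ψ]
        rw [← ENNReal.ofReal_mul (by positivity), ← ENNReal.ofReal_mul (by positivity),
          Real.mul_rpow (by positivity) (by positivity), ← Real.rpow_mul (norm_nonneg _), hbq]
        ring_nf
    _ = _ := by
        rw [lintegral_const_mul' _ _ ENNReal.ofReal_ne_top,
          ← ofReal_integral_eq_lintegral_ofReal
            ((𝓕 u).integrable_norm_rpow_mul_norm_sq (by positivity))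
            (.of_forall fun x ↦ by positivity),
          ← ENNReal.ofReal_mul (by positivity), ← ENNReal.ofReal_mul (by positivity),
          Real.mul_rpow hc.le hM.le]
        ring_nf

end

theorem stmt17 (n : ℕ) (hn : 1 ≤ n) (γ : ℝ) (hγ : 0 < γ) (hγn : γ < (n : ℝ) / 2) :
    ∃ S : ℝ, 0 < S ∧ ∀ u : SchwartzMap (EuclideanSpace ℝ (Fin n)) ℂ,
      S * (∫ x : EuclideanSpace ℝ (Fin n),
            ‖u x‖ ^ (2 * (n : ℝ) / ((n : ℝ) - 2 * γ))) ^ (((n : ℝ) - 2 * γ) / (n : ℝ)) ≤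
        ∫ ξ : EuclideanSpace ℝ (Fin n), ‖ξ‖ ^ (2 * γ) * ‖𝓕 (⇑u) ξ‖ ^ 2 := by
  have hd : Module.finrank ℝ (EuclideanSpace ℝ (Fin n)) = n := finrank_euclideanSpace_fin
  obtain ⟨K, hK, H⟩ := SchwartzMap.lintegral_norm_rpow_le (E := EuclideanSpace ℝ (Fin n))
    (by rwa [hd]) hγ (by rw [hd]; linarith)
  simp only [hd, SchwartzMap.fourier_coe] at H
  have hn0 : (0 : ℝ) < n := by exact_mod_cast hn
  have hs : 0 < (n : ℝ) - 2 * γ := by linarith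
  refine ⟨(K ^ (((n : ℝ) - 2 * γ) / n))⁻¹, by positivity, fun u ↦ ?_⟩
  have H := H u
  set I := ∫ ξ : EuclideanSpace ℝ (Fin n), ‖ξ‖ ^ (2 * γ) * ‖𝓕 (⇑u) ξ‖ ^ 2 with hI
  have hI0 : 0 ≤ I := integral_nonneg fun x ↦ by positivity
  have hle (M : ℝ) (hM : 0 < M) (hIM : I ≤ M ^ 2) :
      ∫ x, ‖u x‖ ^ (2 * (n : ℝ) / (n - 2 * γ)) ≤
        K * M ^ (2 * (n : ℝ) / (n - 2 * γ) - 2) * I := by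
    rw [integral_eq_lintegral_of_nonneg_ae (.of_forall fun x ↦ by positivity)
      (u.continuous.measurable.norm.pow_const _).aestronglyMeasurable]
    exact ENNReal.toReal_le_of_le_ofReal (by positivity) (H M hM hIM)
  have hL0 : 0 ≤ ∫ x, ‖u x‖ ^ (2 * (n : ℝ) / (n - 2 * γ)) :=
    integral_nonneg fun x ↦ by positivity
  rw [inv_mul_le_iff₀ (by positivity)]
  rcases hI0.eq_or_lt with h0 | h0
  · have h1 := hle 1 one_pos (by rw [← h0]; norm_num)
    rw [← h0, mul_zero] at h1 ⊢
    rw [le_antisymm h1 hL0, Real.zero_rpow (by positivity)]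
  · have h1 := hle (I ^ (2⁻¹ : ℝ)) (by positivity) (by
      rw [← Real.rpow_two, ← Real.rpow_mul hI0]; norm_num)
    calc _ ≤ (K * (I ^ (2⁻¹ : ℝ)) ^ (2 * (n : ℝ) / (n - 2 * γ) - 2) * I) ^
          (((n : ℝ) - 2 * γ) / n) := by gcongr
      _ = (K * I ^ ((n : ℝ) / (n - 2 * γ))) ^ (((n : ℝ) - 2 * γ) / n) := by
        congr 1
        rw [← Real.rpow_mul hI0, mul_assoc, ← Real.rpow_add_one h0.ne']
        congr 2
        ring
      _ = _ := by
        rw [Real.mul_rpow hK.le (by positivity), ← Real.rpow_mul hI0,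
          div_mul_div_cancel₀ hs.ne', div_self hn0.ne', Real.rpow_one]
end
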